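/- arXiv:1605.04812 — 9 statements merged into one kernel-verified Lean document; each statement's English description precedes it below -/
import Mathlib

section
/- Let μ be a finitely supported probability distribution on a set S of slates, let φ ∈ ℝ^{(Fin ℓ) × A} be any vector (intrinsic rewards), define the slate value V(s) := 1_sᵀ φ and the marginal-value vector θ := Γ_μ φ. Let G be the Moore–Penrose pseudoinverse of Γ_μ. Then for every slate s with μ(s) > 0 one has 1_sᵀ G θ = V(s). -/
/-! The vector `v := G Γ φ - φ` lies in the kernel of `Γ`, because `Γ G Γ = Γ`. The quadratic form
of `Γ` at `v` is `∑ t, μ t * (1_t ⬝ᵥ v) ^ 2` (`slateGamma_quadForm`), a sum of nonnegative terms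
that must therefore all vanish; where `μ s > 0` this gives `1_s ⬝ᵥ v = 0`, which is the claim. -/

open Matrix BigOperators

/-- Indicator vector of a slate `s : Fin ℓ → A` in `ℝ^{(Fin ℓ) × A}`. -/
noncomputable def slateInd {ℓ : ℕ} {A : Type*} [DecidableEq A] (s : Fin ℓ → A) :
    Fin ℓ × A → ℝ :=
  fun p => if s p.1 = p.2 then 1 else 0

/-- Second-moment matrix `Γ_μ := Σ_s μ(s)·1_s 1_sᵀ` of a distribution `μ` on slates. -/
noncomputable def slateGamma {ℓ : ℕ} {A : Type*} [Fintype A] [DecidableEq A]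
    (μ : (Fin ℓ → A) → ℝ) : Matrix (Fin ℓ × A) (Fin ℓ × A) ℝ :=
  ∑ s : Fin ℓ → A, μ s • vecMulVec (slateInd s) (slateInd s)

lemma slateGamma_quadForm {ℓ : ℕ} {A : Type*} [Fintype A] [DecidableEq A]
    (μ : (Fin ℓ → A) → ℝ) (v : Fin ℓ × A → ℝ) :
    v ⬝ᵥ (slateGamma μ *ᵥ v) = ∑ t : Fin ℓ → A, μ t * (slateInd t ⬝ᵥ v) ^ 2 := by
  rw [slateGamma, sum_mulVec, dotProduct_sum]
  refine Finset.sum_congr rfl fun t _ => ?_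
  rw [smul_mulVec, vecMulVec_mulVec, dotProduct_smul, op_smul_eq_smul, dotProduct_smul,
    dotProduct_comm v, smul_eq_mul, smul_eq_mul, sq]

/-- for a finitely supported probability distribution `μ` on slates,
any intrinsic-reward vector `φ`, the slate value `V(s) := 1_sᵀ φ`, the marginal-value
vector `θ := Γ_μ φ`, and `G` the Moore–Penrose pseudoinverse of `Γ_μ`, one has
`1_sᵀ G θ = V(s)` for every slate `s` with `μ(s) > 0`. -/
theorem pseudoinverse_recovers_slate_value
    {ℓ : ℕ} (hℓ : 1 ≤ ℓ) {A : Type*} [Fintype A] [DecidableEq A]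
    (μ : (Fin ℓ → A) → ℝ) (hμ0 : ∀ s, 0 ≤ μ s) (hμ1 : ∑ s : Fin ℓ → A, μ s = 1)
    (φ : Fin ℓ × A → ℝ)
    (G : Matrix (Fin ℓ × A) (Fin ℓ × A) ℝ)
    (hG1 : slateGamma μ * G * slateGamma μ = slateGamma μ)
    (hG2 : G * slateGamma μ * G = G)
    (hG3 : (slateGamma μ * G)ᵀ = slateGamma μ * G)
    (hG4 : (G * slateGamma μ)ᵀ = G * slateGamma μ)
    (s : Fin ℓ → A) (hs : 0 < μ s) :
    slateInd s ⬝ᵥ G.mulVec ((slateGamma μ).mulVec φ) = slateInd s ⬝ᵥ φ := by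
  set v := G *ᵥ (slateGamma μ *ᵥ φ) - φ with hv
  have hker : slateGamma μ *ᵥ v = 0 := by
    rw [hv, mulVec_sub, mulVec_mulVec, mulVec_mulVec, hG1, sub_self]
  have hsum : ∑ t : Fin ℓ → A, μ t * (slateInd t ⬝ᵥ v) ^ 2 = 0 := by
    rw [← slateGamma_quadForm, hker, dotProduct_zero]
  have hterm := (Finset.sum_eq_zero_iff_of_nonneg
    (fun t _ => mul_nonneg (hμ0 t) (sq_nonneg _))).1 hsum s (Finset.mem_univ s)
  have hzero : slateInd s ⬝ᵥ v = 0 := by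
    simpa [hs.ne'] using hterm
  rwa [hv, dotProduct_sub, sub_eq_zero] at hzero
end

section
/- (Unbiasedness of the pseudoinverse estimator.) Under the ADA and ABS assumptions, the expectation of a single term of the pseudoinverse estimator equals the value of the target policy: E_{x∼D} E_{s∼μ(·|x)} E_{r∼D(·|x,s)} [ r · q_{π,x}ᵀ G_x 1_s ] = V(π). -/
/-!
Fix a context and write `Γ` for its second-moment matrix. Pulling the reward expectation inside
and using additivity of the rewards, the expected estimator is
`∑ₛ μ(s) (1ₛᵀφ) (qᵀ G 1ₛ) = qᵀ G Γ φ`. It remains to see that `1ₜᵀ G Γ φ = 1ₜᵀ φ` for every slate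
`t` in the support of `π`, hence of `μ`. The vector `w = G Γ φ - φ` lies in the kernel of `Γ`
because `Γ G Γ = Γ`, and `wᵀ Γ w = ∑ₛ μ(s) (1ₛᵀ w)²`, so `w` is orthogonal to every slate that
`μ` charges (`slateInd_dotProduct_eq_zero`).
-/

open Matrix BigOperators

theorem slateGamma_mulVec {ℓ : ℕ} {A : Type*} [Fintype A] [DecidableEq A]
    (μ : (Fin ℓ → A) → ℝ) (v : Fin ℓ × A → ℝ) :
    slateGamma μ *ᵥ v = ∑ s, (μ s * (slateInd s ⬝ᵥ v)) • slateInd s := by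
  simp only [slateGamma, Matrix.sum_mulVec, Matrix.smul_mulVec, Matrix.vecMulVec_mulVec,
    op_smul_eq_smul, smul_smul]

/-- The kernel of `Γ_μ` is orthogonal to every slate in the support of `μ`, since
`wᵀ Γ_μ w` is a sum of the nonnegative terms `μ(s) (1ₛᵀ w)²`. -/
theorem slateInd_dotProduct_eq_zero {ℓ : ℕ} {A : Type*} [Fintype A] [DecidableEq A]
    {μ : (Fin ℓ → A) → ℝ} (hμ : ∀ s, 0 ≤ μ s) {w : Fin ℓ × A → ℝ}
    (hw : slateGamma μ *ᵥ w = 0) {t : Fin ℓ → A} (ht : 0 < μ t) :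
    slateInd t ⬝ᵥ w = 0 := by
  have hsum : ∑ s, μ s * (slateInd s ⬝ᵥ w) ^ 2 = 0 := by
    have h : (slateGamma μ *ᵥ w) ⬝ᵥ w = 0 := by rw [hw, zero_dotProduct]
    rw [slateGamma_mulVec, sum_dotProduct] at h
    rw [← h]
    refine Finset.sum_congr rfl fun s _ => ?_
    rw [smul_dotProduct, smul_eq_mul]
    ring
  have hz := (Finset.sum_eq_zero_iff_of_nonneg
    fun s _ => mul_nonneg (hμ s) (sq_nonneg _)).1 hsum t (Finset.mem_univ t)
  exact pow_eq_zero_iff two_ne_zero |>.1 ((mul_eq_zero.1 hz).resolve_left (ne_of_gt ht))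

/-- (Unbiasedness of the pseudoinverse estimator.) Under ADA and ABS,
`E_{x∼D} E_{s∼μ(·|x)} E_{r∼D(·|x,s)} [ r · q_{π,x}ᵀ G_x 1_s ] = V(π)`. -/
theorem pseudoinverse_estimator_unbiased
    {ℓ : ℕ} (hℓ : 1 ≤ ℓ) {A : Type*} [Fintype A] [DecidableEq A]
    {X : Type*} [Fintype X]
    -- context distribution D
    (D : X → ℝ) (hD0 : ∀ x, 0 ≤ D x) (hD1 : ∑ x : X, D x = 1)
    -- logging policy μ(·|x) and target policy π(·|x)
    (μ π : X → (Fin ℓ → A) → ℝ)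
    (hμ0 : ∀ x s, 0 ≤ μ x s) (hμ1 : ∀ x, ∑ s : Fin ℓ → A, μ x s = 1)
    (hπ0 : ∀ x s, 0 ≤ π x s) (hπ1 : ∀ x, ∑ s : Fin ℓ → A, π x s = 1)
    -- ABS: supp π(·|x) ⊆ supp μ(·|x)
    (hABS : ∀ x s, 0 < π x s → 0 < μ x s)
    -- rewards: a finite set R ⊆ [−1,1] and reward distribution D(·|x,s) on R
    (R : Finset ℝ) (hR : ∀ r ∈ R, -1 ≤ r ∧ r ≤ 1)
    (Dr : X → (Fin ℓ → A) → ℝ → ℝ)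
    (hDr0 : ∀ x s r, 0 ≤ Dr x s r) (hDr1 : ∀ x s, ∑ r ∈ R, Dr x s r = 1)
    -- ADA: for each context there is an intrinsic reward vector φ_x with
    -- E_{r∼D(·|x,s)}[r] = 1_sᵀ φ_x for every slate s
    (hADA : ∀ x, ∃ φ : Fin ℓ × A → ℝ,
      ∀ s : Fin ℓ → A, (∑ r ∈ R, Dr x s r * r) = slateInd s ⬝ᵥ φ)
    -- G_x: Moore–Penrose pseudoinverse of Γ_x := Γ_{μ(·|x)}
    (G : X → Matrix (Fin ℓ × A) (Fin ℓ × A) ℝ)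
    (hG1 : ∀ x, slateGamma (μ x) * G x * slateGamma (μ x) = slateGamma (μ x))
    (hG2 : ∀ x, G x * slateGamma (μ x) * G x = G x)
    (hG3 : ∀ x, (slateGamma (μ x) * G x)ᵀ = slateGamma (μ x) * G x)
    (hG4 : ∀ x, (G x * slateGamma (μ x))ᵀ = G x * slateGamma (μ x)) :
    -- E_{x∼D} E_{s∼μ(·|x)} E_{r∼D(·|x,s)} [ r · q_{π,x}ᵀ G_x 1_s ]  =  V(π)
    (∑ x : X, D x * ∑ s : Fin ℓ → A, μ x s * ∑ r ∈ R, Dr x s r *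
        (r * ((∑ t : Fin ℓ → A, π x t • slateInd t) ⬝ᵥ (G x).mulVec (slateInd s))))
      = ∑ x : X, D x * ∑ s : Fin ℓ → A, π x s * ∑ r ∈ R, Dr x s r * r := by
  refine Finset.sum_congr rfl fun x _ => ?_
  congr 1
  obtain ⟨φ, hφ⟩ := hADA x
  set q : Fin ℓ × A → ℝ := ∑ t : Fin ℓ → A, π x t • slateInd t with hq
  have hl : ∑ s : Fin ℓ → A, μ x s * ∑ r ∈ R, Dr x s r *
      (r * (q ⬝ᵥ (G x).mulVec (slateInd s))) = q ⬝ᵥ G x *ᵥ (slateGamma (μ x) *ᵥ φ) := by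
    rw [slateGamma_mulVec, Matrix.mulVec_sum, dotProduct_sum]
    refine Finset.sum_congr rfl fun s _ => ?_
    simp only [← mul_assoc (Dr x s _)]
    rw [← Finset.sum_mul, hφ s, Matrix.mulVec_smul, dotProduct_smul, smul_eq_mul, mul_assoc]
  rw [hl, hq, sum_dotProduct]
  refine Finset.sum_congr rfl fun t _ => ?_
  rw [smul_dotProduct, smul_eq_mul, hφ t]
  rcases (hπ0 x t).eq_or_lt with h0 | hpos
  · rw [← h0, zero_mul, zero_mul]
  · have hw : slateGamma (μ x) *ᵥ (G x *ᵥ (slateGamma (μ x) *ᵥ φ) - φ) = 0 := by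
      rw [Matrix.mulVec_sub, Matrix.mulVec_mulVec, Matrix.mulVec_mulVec, hG1, sub_self]
    have h := slateInd_dotProduct_eq_zero (hμ0 x) hw (hABS x t hpos)
    rw [dotProduct_sub, sub_eq_zero] at h
    rw [h]
end

section
/- (Deviation bound for the pseudoinverse estimator.) Assume ADA and ABS. Let (x_1,s_1,r_1),…,(x_n,s_n,r_n) be i.i.d. with x_i ∼ D, s_i ∼ μ(·|x_i), r_i ∼ D(·|x_i,s_i), and define the pseudoinverse estimator V̂_PI := (1/n) Σ_{i=1}^n r_i · q_{π,x_i}ᵀ G_{x_i} 1_{s_i}. Define σ² := E_{x∼D}[ q_{π,x}ᵀ G_x q_{π,x} ] and ρ := max over x in the support of D and slates s with μ(s|x) > 0 of |q_{π,x}ᵀ G_x 1_s|. Then for any δ ∈ (0,1), with probability at least 1 − δ, |V̂_PI − V(π)| ≤ √(2σ²·ln(2/δ)/n) + 2(ρ+1)·ln(2/δ)/(3n). -/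
/-!
The single-sample estimate `Y = r · qᵀ G 1_s` is unbiased for `V(π)`, satisfies `|Y| ≤ ρ` almost
surely and `E[Y²] ≤ σ²`; the theorem is then Bernstein's inequality for the average of `n` i.i.d.
copies of `Y`, applied to both tails.

Linear algebra: `P = G Γ` is symmetric with `Γ P = Γ`, so `Γ (1 - P) = 0`, and the quadratic form
`vᵀ Γ v = Σ_s μ(s) (1_s · v)²` forces `P 1_s = 1_s` for every `s` in the support of `μ`
(`pinv_mul_gamma_mulVec_slateInd`). By absolute continuity `P q = q`. Hence
`E[Y | x] = qᵀ G Γ φ = (P q)ᵀ φ = qᵀ φ` (`sum_weight_eq`) and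
`E[(qᵀ G 1_s)² | x] = qᵀ G Γ Gᵀ q = qᵀ G (P q) = qᵀ G q` (`sum_weight_sq`).

Concentration: `exp u ≤ 1 + u + u² / (2 (1 - a))` for `|u| ≤ 3 a`, `a < 1`, gives the Bernstein bound
on the moment generating function (`mgf_le`), and Chernoff's method with an explicit parameter gives
the tail bound (`bernstein_tail`). All probabilities are finite weighted sums.
-/

open Matrix BigOperators
open scoped Classical

/-! ### Bernstein's inequality on a finite probability space -/

/-- The power series of `exp` is dominated from its second term on by a geometric series, because
`2 · 3 ^ k ≤ (k + 2)!`. -/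
lemma exp_le_bernstein {u a : ℝ} (ha : a < 1) (hu : |u| ≤ 3 * a) :
    Real.exp u ≤ 1 + u + u ^ 2 / (2 * (1 - a)) := by
  have ha0 : 0 ≤ a := by linarith [abs_nonneg u]
  have h1 : HasSum (fun k : ℕ => u ^ k / (k.factorial : ℝ)) (Real.exp u) := by
    rw [Real.exp_eq_exp_ℝ]
    exact NormedSpace.expSeries_div_hasSum_exp u
  have h2 := (hasSum_nat_add_iff' 2).mpr h1
  have h3 : HasSum (fun k : ℕ => u ^ 2 / 2 * a ^ k) (u ^ 2 / 2 * (1 - a)⁻¹) :=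
    (hasSum_geometric_of_lt_one ha0 ha).mul_left _
  have hle := hasSum_le (fun k => ?_) h2 h3
  · simp only [Finset.sum_range_succ, Finset.sum_range_zero, pow_zero, pow_one,
      Nat.factorial_zero, Nat.factorial_one, Nat.cast_one, div_one, zero_add] at hle
    have : u ^ 2 / 2 * (1 - a)⁻¹ = u ^ 2 / (2 * (1 - a)) := by
      rw [div_mul_eq_div_div, div_eq_mul_inv (u ^ 2 / 2)]
    linarith
  · have hf : (2 : ℝ) * 3 ^ k ≤ ((k + 2).factorial : ℝ) := by
      have := Nat.factorial_mul_pow_le_factorial (m := 2) (n := k)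
      rw [add_comm 2 k] at this
      simpa using (Nat.cast_le (α := ℝ)).mpr this
    have hf0 : (0 : ℝ) < ((k + 2).factorial : ℝ) := by positivity
    have hk : u ^ k ≤ 3 ^ k * a ^ k := by
      rw [← mul_pow]
      calc u ^ k ≤ |u ^ k| := le_abs_self _
        _ = |u| ^ k := abs_pow u k
        _ ≤ _ := pow_le_pow_left₀ (abs_nonneg _) hu k
    rw [div_le_iff₀ hf0]
    calc u ^ (k + 2) = u ^ 2 * u ^ k := by ring
      _ ≤ u ^ 2 * (3 ^ k * a ^ k) := by gcongr
      _ = u ^ 2 / 2 * a ^ k * (2 * 3 ^ k) := by ring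
      _ ≤ _ := by gcongr

lemma mgf_le {Ω : Type*} [Fintype Ω] (p Z : Ω → ℝ) (hp0 : ∀ ω, 0 ≤ p ω) (hp1 : ∑ ω, p ω = 1)
    {c v lam : ℝ} (hZ : ∀ ω, 0 < p ω → |Z ω| ≤ 3 * c) (hmean : ∑ ω, p ω * Z ω = 0)
    (hvar : ∑ ω, p ω * Z ω ^ 2 ≤ v) (hlam : 0 ≤ lam) (hlc : lam * c < 1) :
    ∑ ω, p ω * Real.exp (lam * Z ω) ≤ Real.exp (lam ^ 2 * v / (2 * (1 - lam * c))) := by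
  have hpos : 0 < 2 * (1 - lam * c) := by linarith
  have hterm : ∀ ω, p ω * Real.exp (lam * Z ω) ≤
      p ω + lam * (p ω * Z ω) + lam ^ 2 / (2 * (1 - lam * c)) * (p ω * Z ω ^ 2) := by
    intro ω
    rcases (hp0 ω).eq_or_lt with h | h
    · simp [← h]
    · have := exp_le_bernstein (u := lam * Z ω) hlc (by
        rw [abs_mul, abs_of_nonneg hlam]
        nlinarith [mul_le_mul_of_nonneg_left (hZ ω h) hlam])
      refine (mul_le_mul_of_nonneg_left this h.le).trans (le_of_eq ?_)
      ring
  calc ∑ ω, p ω * Real.exp (lam * Z ω)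
      ≤ ∑ ω, (p ω + lam * (p ω * Z ω) + lam ^ 2 / (2 * (1 - lam * c)) * (p ω * Z ω ^ 2)) :=
        Finset.sum_le_sum fun ω _ => hterm ω
    _ = 1 + lam ^ 2 / (2 * (1 - lam * c)) * ∑ ω, p ω * Z ω ^ 2 := by
        rw [Finset.sum_add_distrib, Finset.sum_add_distrib, ← Finset.mul_sum, ← Finset.mul_sum,
          hp1, hmean, mul_zero, add_zero]
    _ ≤ 1 + lam ^ 2 / (2 * (1 - lam * c)) * v := by gcongr
    _ = lam ^ 2 * v / (2 * (1 - lam * c)) + 1 := by ring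
    _ ≤ _ := Real.add_one_le_exp _

lemma sum_prod_pow {Ω : Type*} [Fintype Ω] (f : Ω → ℝ) (n : ℕ) :
    ∑ ω : Fin n → Ω, ∏ i, f (ω i) = (∑ ω, f ω) ^ n := by
  have := Finset.prod_univ_sum (fun _ : Fin n => (Finset.univ : Finset Ω)) (fun _ => f)
  rw [Fintype.piFinset_univ] at this
  rw [← this]
  simp

/-- One-sided Bernstein inequality for centered variables with `|Z| ≤ 3 c` and variance at most
`w ^ 2`; the threshold is parametrised by `t`, with confidence level `exp (-n t² / 2)`. -/
lemma bernstein_tail {Ω : Type*} [Fintype Ω] (p Z : Ω → ℝ) (hp0 : ∀ ω, 0 ≤ p ω)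
    (hp1 : ∑ ω, p ω = 1) {c w t : ℝ} (hc : 0 < c) (hw : 0 ≤ w) (ht : 0 < t)
    (hZ : ∀ ω, 0 < p ω → |Z ω| ≤ 3 * c) (hmean : ∑ ω, p ω * Z ω = 0)
    (hvar : ∑ ω, p ω * Z ω ^ 2 ≤ w ^ 2) (n : ℕ) :
    ∑ ω : Fin n → Ω, (if n * (w * t + c * t ^ 2) < ∑ i, Z (ω i) then ∏ i, p (ω i) else 0)
      ≤ Real.exp (-(n * t ^ 2 / 2)) := by
  -- The factor 2 in the denominator keeps `1 - lam * c` positive even when `w = 0`.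
  set lam : ℝ := t / (w + 2 * c * t) with hlam
  have hct : 0 < c * t := mul_pos hc ht
  have hden : 0 < w + 2 * c * t := by linarith
  have hlam0 : 0 ≤ lam := by positivity
  have h1c : 1 - lam * c = (w + c * t) / (w + 2 * c * t) := by
    rw [hlam]; field_simp; ring
  have hlc : lam * c < 1 := by
    have : 0 < (w + c * t) / (w + 2 * c * t) := by positivity
    linarith
  have hmgf := mgf_le p Z hp0 hp1 hZ hmean hvar hlam0 hlc
  have hexp : lam ^ 2 * w ^ 2 / (2 * (1 - lam * c)) - lam * (w * t + c * t ^ 2) ≤ -(t ^ 2 / 2) := by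
    have hwc : 0 < w + c * t := by linarith
    rw [h1c, hlam]
    have : (t / (w + 2 * c * t)) ^ 2 * w ^ 2 / (2 * ((w + c * t) / (w + 2 * c * t)))
        - t / (w + 2 * c * t) * (w * t + c * t ^ 2)
        = -(t ^ 2 / 2) - t ^ 2 * (w * (c * t)) / (2 * (w + c * t) * (w + 2 * c * t)) := by
      field_simp
      ring
    rw [this]
    have : 0 ≤ t ^ 2 * (w * (c * t)) / (2 * (w + c * t) * (w + 2 * c * t)) := by positivity
    linarith
  calc ∑ ω : Fin n → Ω, (if n * (w * t + c * t ^ 2) < ∑ i, Z (ω i) then ∏ i, p (ω i) else 0)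
      ≤ ∑ ω : Fin n → Ω, Real.exp (-(lam * (n * (w * t + c * t ^ 2)))) *
          ∏ i, (p (ω i) * Real.exp (lam * Z (ω i))) := by
        refine Finset.sum_le_sum fun ω _ => ?_
        have hP : 0 ≤ ∏ i, p (ω i) := Finset.prod_nonneg fun i _ => hp0 _
        rw [Finset.prod_mul_distrib, ← Real.exp_sum, ← Finset.mul_sum, mul_left_comm,
          ← Real.exp_add]
        split_ifs with h
        · refine le_mul_of_one_le_right hP (Real.one_le_exp ?_)
          nlinarith [mul_le_mul_of_nonneg_left h.le hlam0]
        · positivity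
    _ = Real.exp (-(lam * (n * (w * t + c * t ^ 2)))) *
          (∑ ω, p ω * Real.exp (lam * Z ω)) ^ n := by
        rw [← Finset.mul_sum, sum_prod_pow (fun ω => p ω * Real.exp (lam * Z ω))]
    _ ≤ Real.exp (-(lam * (n * (w * t + c * t ^ 2)))) *
          Real.exp (lam ^ 2 * w ^ 2 / (2 * (1 - lam * c))) ^ n := by
        have : 0 ≤ ∑ ω, p ω * Real.exp (lam * Z ω) :=
          Finset.sum_nonneg fun ω _ => mul_nonneg (hp0 ω) (Real.exp_pos _).le
        gcongr
    _ = Real.exp (n * (lam ^ 2 * w ^ 2 / (2 * (1 - lam * c)) - lam * (w * t + c * t ^ 2))) := by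
        rw [← Real.exp_nat_mul, ← Real.exp_add]
        congr 1
        ring
    _ ≤ _ := by
        apply Real.exp_le_exp.mpr
        have := mul_le_mul_of_nonneg_left hexp (Nat.cast_nonneg (α := ℝ) n)
        linarith

/-- Two-sided Bernstein inequality for the sample mean, stated as a lower bound on the weight of
the event that the mean of `Y` is close to its expectation `V`. -/
lemma bernstein_two_sided {Ω : Type*} [Fintype Ω] (p Y : Ω → ℝ) (hp0 : ∀ ω, 0 ≤ p ω)
    (hp1 : ∑ ω, p ω = 1) {b V v : ℝ} (hb : 0 < b)
    (hY : ∀ ω, 0 < p ω → |Y ω - V| ≤ b) (hmean : ∑ ω, p ω * Y ω = V)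
    (hvar : ∑ ω, p ω * Y ω ^ 2 ≤ v) (n : ℕ) (hn : 0 < n) (δ : ℝ) (hδ0 : 0 < δ) (hδ1 : δ < 1) :
    1 - δ ≤ ∑ ω : Fin n → Ω,
      if |(1 / (n : ℝ)) * (∑ i, Y (ω i)) - V|
          ≤ Real.sqrt (2 * v * Real.log (2 / δ) / n) + 2 * b * Real.log (2 / δ) / (3 * n)
      then ∏ i, p (ω i) else 0 := by
  have hn' : (0 : ℝ) < n := Nat.cast_pos.mpr hn
  set L := Real.log (2 / δ) with hL
  have hLpos : 0 < L := Real.log_pos (by rw [lt_div_iff₀ hδ0]; linarith)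
  have hv0 : 0 ≤ v :=
    (Finset.sum_nonneg fun ω _ => mul_nonneg (hp0 ω) (sq_nonneg (Y ω))).trans hvar
  set w := Real.sqrt v with hw
  set t := Real.sqrt (2 * L / n) with ht
  have htpos : 0 < t := Real.sqrt_pos.mpr (by positivity)
  have ht2 : t ^ 2 = 2 * L / n := Real.sq_sqrt (by positivity)
  have hw2 : w ^ 2 = v := Real.sq_sqrt hv0
  have hbound : Real.sqrt (2 * v * L / n) + 2 * b * L / (3 * n) = w * t + b / 3 * t ^ 2 := by
    rw [ht2, hw, ht, ← Real.sqrt_mul hv0]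
    congr 1
    · congr 1; ring
    · field_simp
  have hlevel : Real.exp (-(n * t ^ 2 / 2)) = δ / 2 := by
    have : (n : ℝ) * t ^ 2 / 2 = L := by rw [ht2]; field_simp
    rw [this, hL, ← Real.log_inv, Real.exp_log (by positivity), inv_div]
  have hc0 : ∑ ω, p ω * (Y ω - V) = 0 := by
    simp_rw [mul_sub]
    rw [Finset.sum_sub_distrib, ← Finset.sum_mul, hp1, hmean]; ring
  have hvar' : ∑ ω, p ω * (Y ω - V) ^ 2 ≤ w ^ 2 := by
    have : ∑ ω, p ω * (Y ω - V) ^ 2 = ∑ ω, p ω * Y ω ^ 2 - V ^ 2 := by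
      have e : ∀ ω, p ω * (Y ω - V) ^ 2 = p ω * Y ω ^ 2 - 2 * V * (p ω * Y ω) + V ^ 2 * p ω :=
        fun ω => by ring
      simp_rw [e]
      rw [Finset.sum_add_distrib, Finset.sum_sub_distrib, ← Finset.mul_sum, ← Finset.mul_sum,
        hp1, hmean]
      ring
    rw [this, hw2]
    nlinarith [sq_nonneg V]
  have hup := bernstein_tail p (fun ω => Y ω - V) hp0 hp1 (c := b / 3) (by positivity)
    (Real.sqrt_nonneg v) htpos (fun ω h => (hY ω h).trans (by linarith)) hc0 hvar' n
  have hdn := bernstein_tail p (fun ω => -(Y ω - V)) hp0 hp1 (c := b / 3) (by positivity)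
    (Real.sqrt_nonneg v) htpos (fun ω h => by rw [abs_neg]; exact (hY ω h).trans (by linarith))
    (by simp_rw [mul_neg]; rw [Finset.sum_neg_distrib, hc0, neg_zero])
    (by simpa only [neg_sq] using hvar') n
  rw [hlevel] at hup hdn
  have htot : ∑ ω : Fin n → Ω, ∏ i, p (ω i) = 1 := by rw [sum_prod_pow, hp1, one_pow]
  rw [hbound]
  have hsplit : ∑ ω : Fin n → Ω, ∏ i, p (ω i) ≤
      ∑ ω : Fin n → Ω,
        ((if |(1 / (n : ℝ)) * (∑ i, Y (ω i)) - V| ≤ w * t + b / 3 * t ^ 2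
          then ∏ i, p (ω i) else 0)
        + (if n * (w * t + b / 3 * t ^ 2) < ∑ i, (Y (ω i) - V) then ∏ i, p (ω i) else 0)
        + (if n * (w * t + b / 3 * t ^ 2) < ∑ i, -(Y (ω i) - V) then ∏ i, p (ω i) else 0)) := by
    refine Finset.sum_le_sum fun ω _ => ?_
    have hP : 0 ≤ ∏ i, p (ω i) := Finset.prod_nonneg fun i _ => hp0 _
    have hS : ∑ i, (Y (ω i) - V) = n * ((1 / (n : ℝ)) * (∑ i, Y (ω i)) - V) := by
      rw [Finset.sum_sub_distrib]
      simp
      field_simp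
    rw [Finset.sum_neg_distrib, hS]
    generalize (1 / (n : ℝ)) * (∑ i, Y (ω i)) - V = m
    generalize w * t + b / 3 * t ^ 2 = B
    by_cases h : |m| ≤ B
    · rw [if_pos h]
      split_ifs <;> linarith
    · rcases lt_abs.mp (not_le.mp h) with h' | h'
      · rw [if_pos (mul_lt_mul_of_pos_left h' hn')]
        split_ifs <;> linarith
      · rw [if_pos (c := n * B < -(n * m)) (by
          rw [← mul_neg]; exact mul_lt_mul_of_pos_left h' hn')]
        split_ifs <;> linarith
  rw [Finset.sum_add_distrib, Finset.sum_add_distrib, htot] at hsplit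
  linarith

/-! ### The pseudoinverse of the slate second-moment matrix -/

section Slate

variable {ℓ : ℕ} {A : Type*} [Fintype A] [DecidableEq A]

lemma dotProduct_slateGamma_mulVec (μ : (Fin ℓ → A) → ℝ) (u v : Fin ℓ × A → ℝ) :
    u ⬝ᵥ (slateGamma μ).mulVec v = ∑ s, μ s * ((u ⬝ᵥ slateInd s) * (slateInd s ⬝ᵥ v)) := by
  unfold slateGamma
  rw [Matrix.sum_mulVec, dotProduct_sum]
  refine Finset.sum_congr rfl fun s _ => ?_
  rw [Matrix.smul_mulVec, dotProduct_smul, Matrix.vecMulVec_mulVec]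
  simp [dotProduct_smul, mul_comm]

lemma slateGamma_transpose (μ : (Fin ℓ → A) → ℝ) : (slateGamma μ)ᵀ = slateGamma μ := by
  unfold slateGamma
  rw [Matrix.transpose_sum]
  simp [Matrix.transpose_smul, Matrix.transpose_vecMulVec]

/-- The orthogonal projection `G Γ` fixes the indicators of all slates in the support of `μ`. -/
lemma pinv_mul_gamma_mulVec_slateInd (μ : (Fin ℓ → A) → ℝ) (hμ0 : ∀ s, 0 ≤ μ s)
    (G : Matrix (Fin ℓ × A) (Fin ℓ × A) ℝ)
    (hG1 : slateGamma μ * G * slateGamma μ = slateGamma μ)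
    (hG4 : (G * slateGamma μ)ᵀ = G * slateGamma μ) (s : Fin ℓ → A) (hs : 0 < μ s) :
    (G * slateGamma μ).mulVec (slateInd s) = slateInd s := by
  set P := G * slateGamma μ with hP
  -- `d = (1 - P) 1_s` lies in the kernel of `Γ`, hence is orthogonal to `1_s` and, `P` being
  -- symmetric, to `P 1_s`; so it is orthogonal to itself.
  set d := slateInd s - P.mulVec (slateInd s) with hd
  have hΓd : (slateGamma μ).mulVec d = 0 := by
    rw [hd, Matrix.mulVec_sub, Matrix.mulVec_mulVec, hP, ← Matrix.mul_assoc, hG1, sub_self]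
  have hquad := dotProduct_slateGamma_mulVec μ d d
  rw [hΓd, dotProduct_zero] at hquad
  have hnn : ∀ s' ∈ Finset.univ, 0 ≤ μ s' * ((d ⬝ᵥ slateInd s') * (slateInd s' ⬝ᵥ d)) := by
    intro s' _
    rw [dotProduct_comm d]
    exact mul_nonneg (hμ0 s') (mul_self_nonneg _)
  have hz := (Finset.sum_eq_zero_iff_of_nonneg hnn).mp hquad.symm s (Finset.mem_univ s)
  have hsd : slateInd s ⬝ᵥ d = 0 := by
    rw [dotProduct_comm d] at hz
    rcases mul_eq_zero.mp hz with h | h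
    · exact absurd h hs.ne'
    · exact mul_self_eq_zero.mp h
  have hPd : P.mulVec d = 0 := by
    rw [hP, ← Matrix.mulVec_mulVec, hΓd, Matrix.mulVec_zero]
  have hdd : d ⬝ᵥ d = 0 := by
    have hPs : P.mulVec (slateInd s) ⬝ᵥ d = 0 := by
      rw [← hG4, Matrix.mulVec_transpose, ← Matrix.dotProduct_mulVec, hPd, dotProduct_zero]
    calc d ⬝ᵥ d = slateInd s ⬝ᵥ d - P.mulVec (slateInd s) ⬝ᵥ d := sub_dotProduct _ _ _
      _ = 0 := by rw [hsd, hPs, sub_zero]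
  have := dotProduct_self_eq_zero.mp hdd
  rw [hd, sub_eq_zero] at this
  exact this.symm

lemma pinv_mul_gamma_mulVec_mix (μ ν : (Fin ℓ → A) → ℝ) (hμ0 : ∀ s, 0 ≤ μ s)
    (hν0 : ∀ s, 0 ≤ ν s) (hABS : ∀ s, 0 < ν s → 0 < μ s)
    (G : Matrix (Fin ℓ × A) (Fin ℓ × A) ℝ)
    (hG1 : slateGamma μ * G * slateGamma μ = slateGamma μ)
    (hG4 : (G * slateGamma μ)ᵀ = G * slateGamma μ) :
    (G * slateGamma μ).mulVec (∑ t, ν t • slateInd t) = ∑ t, ν t • slateInd t := by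
  rw [Matrix.mulVec_sum]
  refine Finset.sum_congr rfl fun t _ => ?_
  rw [Matrix.mulVec_smul]
  rcases (hν0 t).eq_or_lt with h | h
  · simp [← h]
  · rw [pinv_mul_gamma_mulVec_slateInd μ hμ0 G hG1 hG4 t (hABS t h)]

/-- The importance weights `qᵀ G 1_s` reproduce the mean of every additive reward under the
target policy, provided `q` is fixed by `G Γ`. -/
lemma sum_weight_eq (μ : (Fin ℓ → A) → ℝ) (G : Matrix (Fin ℓ × A) (Fin ℓ × A) ℝ)
    (hG4 : (G * slateGamma μ)ᵀ = G * slateGamma μ) (q φ : Fin ℓ × A → ℝ)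
    (hPq : (G * slateGamma μ).mulVec q = q) :
    ∑ s, μ s * ((slateInd s ⬝ᵥ φ) * (q ⬝ᵥ G.mulVec (slateInd s))) = q ⬝ᵥ φ := by
  have h := dotProduct_slateGamma_mulVec μ (q ᵥ* G) φ
  rw [← Matrix.dotProduct_mulVec, Matrix.mulVec_mulVec, Matrix.dotProduct_mulVec,
    ← Matrix.mulVec_transpose, hG4, hPq] at h
  rw [h]
  refine Finset.sum_congr rfl fun s _ => ?_
  rw [Matrix.dotProduct_mulVec, mul_comm (slateInd s ⬝ᵥ φ)]

lemma sum_weight_sq (μ : (Fin ℓ → A) → ℝ) (G : Matrix (Fin ℓ × A) (Fin ℓ × A) ℝ)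
    (hG4 : (G * slateGamma μ)ᵀ = G * slateGamma μ) (q : Fin ℓ × A → ℝ)
    (hPq : (G * slateGamma μ).mulVec q = q) :
    ∑ s, μ s * (q ⬝ᵥ G.mulVec (slateInd s)) ^ 2 = q ⬝ᵥ G.mulVec q := by
  have h := dotProduct_slateGamma_mulVec μ (q ᵥ* G) (q ᵥ* G)
  -- `Γ Gᵀ q = (G Γ)ᵀ q = q`, so one of the two factors `Gᵀ q` collapses.
  have hΓ : (slateGamma μ).mulVec (q ᵥ* G) = q := by
    rw [← Matrix.mulVec_transpose, Matrix.mulVec_mulVec]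
    conv_lhs => rw [← slateGamma_transpose μ, ← Matrix.transpose_mul, hG4]
    exact hPq
  rw [hΓ, ← Matrix.dotProduct_mulVec] at h
  rw [h]
  refine Finset.sum_congr rfl fun s _ => ?_
  rw [dotProduct_comm (slateInd s), ← Matrix.dotProduct_mulVec, sq]

end Slate

/-- (Deviation bound for the pseudoinverse estimator.) Under ADA and ABS,
for `n` i.i.d. logged samples `(x_i, s_i, r_i)` with `x_i ∼ D`, `s_i ∼ μ(·|x_i)`,
`r_i ∼ D(·|x_i,s_i)`, with probability at least `1 − δ`,
`|V̂_PI − V(π)| ≤ √(2σ²·ln(2/δ)/n) + 2(ρ+1)·ln(2/δ)/(3n)`. -/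
theorem pseudoinverse_estimator_deviation
    {ℓ : ℕ} (hℓ : 1 ≤ ℓ) {A : Type*} [Fintype A] [DecidableEq A]
    {X : Type*} [Fintype X]
    (D : X → ℝ) (hD0 : ∀ x, 0 ≤ D x) (hD1 : ∑ x : X, D x = 1)
    (μ π : X → (Fin ℓ → A) → ℝ)
    (hμ0 : ∀ x s, 0 ≤ μ x s) (hμ1 : ∀ x, ∑ s : Fin ℓ → A, μ x s = 1)
    (hπ0 : ∀ x s, 0 ≤ π x s) (hπ1 : ∀ x, ∑ s : Fin ℓ → A, π x s = 1)
    (hABS : ∀ x s, 0 < π x s → 0 < μ x s)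
    -- rewards: a finite set R ⊆ [−1,1]; the reward distribution is over `{r // r ∈ R}`
    (R : Finset ℝ) (hR : ∀ r ∈ R, -1 ≤ r ∧ r ≤ 1)
    (Dr : X → (Fin ℓ → A) → {r : ℝ // r ∈ R} → ℝ)
    (hDr0 : ∀ x s r, 0 ≤ Dr x s r) (hDr1 : ∀ x s, ∑ r : {r : ℝ // r ∈ R}, Dr x s r = 1)
    -- ADA
    (hADA : ∀ x, ∃ φ : Fin ℓ × A → ℝ,
      ∀ s : Fin ℓ → A, (∑ r : {r : ℝ // r ∈ R}, Dr x s r * (r : ℝ)) = slateInd s ⬝ᵥ φ)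
    -- G_x: Moore–Penrose pseudoinverse of Γ_x := Γ_{μ(·|x)}
    (G : X → Matrix (Fin ℓ × A) (Fin ℓ × A) ℝ)
    (hG1 : ∀ x, slateGamma (μ x) * G x * slateGamma (μ x) = slateGamma (μ x))
    (hG2 : ∀ x, G x * slateGamma (μ x) * G x = G x)
    (hG3 : ∀ x, (slateGamma (μ x) * G x)ᵀ = slateGamma (μ x) * G x)
    (hG4 : ∀ x, (G x * slateGamma (μ x))ᵀ = G x * slateGamma (μ x))
    -- q_{π,x}
    (q : X → Fin ℓ × A → ℝ) (hq : ∀ x, q x = ∑ t : Fin ℓ → A, π x t • slateInd t)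
    -- V(π)
    (Vπ : ℝ)
    (hVπ : Vπ = ∑ x : X, D x * ∑ s : Fin ℓ → A, π x s *
                  ∑ r : {r : ℝ // r ∈ R}, Dr x s r * (r : ℝ))
    -- σ² := E_{x∼D}[ q_{π,x}ᵀ G_x q_{π,x} ]
    (σsq : ℝ) (hσsq : σsq = ∑ x : X, D x * (q x ⬝ᵥ (G x).mulVec (q x)))
    -- ρ := max over x in supp D and s with μ(s|x) > 0 of |q_{π,x}ᵀ G_x 1_s|
    (ρ : ℝ)
    (hρ : IsGreatest {v : ℝ | ∃ (x : X) (s : Fin ℓ → A), 0 < D x ∧ 0 < μ x s ∧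
            v = |q x ⬝ᵥ (G x).mulVec (slateInd s)|} ρ)
    (n : ℕ) (hn : 0 < n)
    (δ : ℝ) (hδ0 : 0 < δ) (hδ1 : δ < 1) :
    -- probability, under the n-fold i.i.d. joint distribution of (x, s, r), of the
    -- event that the estimator deviates by at most the bound, is at least 1 − δ
    (1 : ℝ) - δ ≤
      ∑ ω : Fin n → X × (Fin ℓ → A) × {r : ℝ // r ∈ R},
        if |(1 / (n : ℝ)) * (∑ i : Fin n,
              ((ω i).2.2 : ℝ) * (q (ω i).1 ⬝ᵥ ((G (ω i).1).mulVec (slateInd (ω i).2.1))))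
            - Vπ|
            ≤ Real.sqrt (2 * σsq * Real.log (2 / δ) / n)
              + 2 * (ρ + 1) * Real.log (2 / δ) / (3 * n)
        then ∏ i : Fin n, D (ω i).1 * μ (ω i).1 (ω i).2.1 * Dr (ω i).1 (ω i).2.1 (ω i).2.2
        else 0 := by
  have hPq : ∀ x, (G x * slateGamma (μ x)).mulVec (q x) = q x := fun x => by
    rw [hq x]
    exact pinv_mul_gamma_mulVec_mix (μ x) (π x) (hμ0 x) (hπ0 x) (hABS x) (G x) (hG1 x) (hG4 x)
  set W : X → (Fin ℓ → A) → ℝ := fun x s => q x ⬝ᵥ (G x).mulVec (slateInd s) with hW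
  have hsum : ∀ f : X → (Fin ℓ → A) → {r : ℝ // r ∈ R} → ℝ,
      ∑ z : X × (Fin ℓ → A) × {r : ℝ // r ∈ R},
        D z.1 * μ z.1 z.2.1 * Dr z.1 z.2.1 z.2.2 * f z.1 z.2.1 z.2.2
      = ∑ x, D x * ∑ s, μ x s * ∑ r, Dr x s r * f x s r := by
    intro f
    simp_rw [Fintype.sum_prod_type, Finset.mul_sum, mul_assoc]
  have hrew : ∀ x s, |∑ r : {r : ℝ // r ∈ R}, Dr x s r * (r : ℝ)| ≤ 1 := fun x s => by
    refine (Finset.abs_sum_le_sum_abs _ _).trans ?_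
    rw [← hDr1 x s]
    refine Finset.sum_le_sum fun r _ => ?_
    rw [abs_mul, abs_of_nonneg (hDr0 x s r)]
    exact mul_le_of_le_one_right (hDr0 x s r) (abs_le.mpr (hR r r.2))
  have hV1 : |Vπ| ≤ 1 := by
    rw [hVπ, ← hD1]
    refine (Finset.abs_sum_le_sum_abs _ _).trans (Finset.sum_le_sum fun x _ => ?_)
    rw [abs_mul, abs_of_nonneg (hD0 x)]
    refine mul_le_of_le_one_right (hD0 x) ?_
    rw [← hπ1 x]
    refine (Finset.abs_sum_le_sum_abs _ _).trans (Finset.sum_le_sum fun s _ => ?_)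
    rw [abs_mul, abs_of_nonneg (hπ0 x s)]
    exact mul_le_of_le_one_right (hπ0 x s) (hrew x s)
  have hρ0 : 0 ≤ ρ := by
    obtain ⟨x, s, _, _, h⟩ := hρ.1
    rw [h]; exact abs_nonneg _
  refine bernstein_two_sided
    (fun z : X × (Fin ℓ → A) × {r : ℝ // r ∈ R} => D z.1 * μ z.1 z.2.1 * Dr z.1 z.2.1 z.2.2)
    (fun z => (z.2.2 : ℝ) * W z.1 z.2.1) (b := ρ + 1) (V := Vπ) (v := σsq)
    ?_ ?_ (by linarith) ?_ ?_ ?_ n hn δ hδ0 hδ1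
  · exact fun z => mul_nonneg (mul_nonneg (hD0 _) (hμ0 _ _)) (hDr0 _ _ _)
  · have := hsum (fun _ _ _ => 1)
    simp only [mul_one, hDr1, hμ1, hD1] at this
    exact this
  · rintro ⟨x, s, r⟩ hz
    dsimp only at hz ⊢
    have hDμ : 0 < D x * μ x s := pos_of_mul_pos_left hz (hDr0 x s r)
    have hDx : 0 < D x := pos_of_mul_pos_left hDμ (hμ0 x s)
    have hμs : 0 < μ x s := pos_of_mul_pos_right hDμ (hD0 x)
    have hWρ : |W x s| ≤ ρ := hρ.2 ⟨x, s, hDx, hμs, rfl⟩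
    have hrW : |(r : ℝ) * W x s| ≤ ρ := by
      rw [abs_mul]
      exact (mul_le_of_le_one_left (abs_nonneg _) (abs_le.mpr (hR r r.2))).trans hWρ
    exact (abs_sub _ _).trans (add_le_add hrW hV1)
  · rw [hsum (fun x s r => (r : ℝ) * W x s), hVπ]
    refine Finset.sum_congr rfl fun x _ => ?_
    obtain ⟨φ, hφ⟩ := hADA x
    congr 1
    calc ∑ s, μ x s * ∑ r : {r : ℝ // r ∈ R}, Dr x s r * ((r : ℝ) * W x s)
        = ∑ s, μ x s * ((slateInd s ⬝ᵥ φ) * W x s) := by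
          refine Finset.sum_congr rfl fun s _ => ?_
          rw [← hφ s, Finset.sum_mul]
          simp_rw [mul_assoc]
      _ = q x ⬝ᵥ φ := sum_weight_eq (μ x) (G x) (hG4 x) (q x) φ (hPq x)
      _ = ∑ s, π x s * (slateInd s ⬝ᵥ φ) := by
          rw [hq x, sum_dotProduct]
          simp [smul_dotProduct]
      _ = _ := by simp_rw [hφ]
  · rw [hsum (fun x s r => ((r : ℝ) * W x s) ^ 2), hσsq]
    refine Finset.sum_le_sum fun x _ => mul_le_mul_of_nonneg_left ?_ (hD0 x)
    rw [← sum_weight_sq (μ x) (G x) (hG4 x) (q x) (hPq x)]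
    refine Finset.sum_le_sum fun s _ => mul_le_mul_of_nonneg_left ?_ (hμ0 x s)
    calc ∑ r : {r : ℝ // r ∈ R}, Dr x s r * ((r : ℝ) * W x s) ^ 2
        ≤ ∑ r : {r : ℝ // r ∈ R}, Dr x s r * (W x s) ^ 2 := by
          refine Finset.sum_le_sum fun r _ => mul_le_mul_of_nonneg_left ?_ (hDr0 x s r)
          rw [mul_pow]
          refine mul_le_of_le_one_left (sq_nonneg _) ?_
          exact (sq_le_one_iff_abs_le_one _).mpr (abs_le.mpr (hR r r.2))
      _ = W x s ^ 2 := by rw [← Finset.sum_mul, hDr1, one_mul]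
end

section
/- (Pseudoinverse estimator when the target policy equals the logging policy.) Suppose π(·|x) = μ(·|x) for every context x. Then σ² := E_{x∼D}[ q_{π,x}ᵀ G_x q_{π,x} ] = 1 and ρ := max over x in the support of D and slates s with μ(s|x) > 0 of |q_{π,x}ᵀ G_x 1_s| = 1; moreover, for every context x, every slate s with μ(s|x) > 0 and every real r, q_{μ(·|x)}ᵀ G_x (r·1_s) = r, so the pseudoinverse estimator reduces to the empirical average of rewards: (1/n) Σ_{i=1}^n r_i · q_{μ(·|x_i)}ᵀ G_{x_i} 1_{s_i} = (1/n) Σ_{i=1}^n r_i whenever each s_i satisfies μ(s_i|x_i) > 0. -/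
/-!
Write `w` for the vector with all entries `1/ℓ`. Every slate has exactly one action per slot, so
`wᵀ 1_s = 1` for each slate, and hence `wᵀ Γ_μ = q_μᵀ`. The identity `Γ G Γ = Γ` says that
`y := w - (Γ G)ᵀ w` satisfies `yᵀ Γ = 0`; then `0 = yᵀ Γ y = Σ_s μ(s) (yᵀ 1_s)²`, so `yᵀ 1_s = 0`
on the support of `μ` (`dotProduct_slateInd_eq_zero`). Consequently
`q_μᵀ G 1_s = wᵀ Γ G 1_s = wᵀ 1_s = 1` for `μ(s) > 0` (`slateQ_dotProduct_mulVec_slateInd`),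
and all four claims follow from this equality.
-/

open Matrix BigOperators

/-- Marginal vector `q_μ := Σ_s μ(s)·1_s`. -/
noncomputable def slateQ {ℓ : ℕ} {A : Type*} [Fintype A] [DecidableEq A]
    (μ : (Fin ℓ → A) → ℝ) : Fin ℓ × A → ℝ :=
  ∑ s : Fin ℓ → A, μ s • slateInd s

theorem vecMul_slateGamma {ℓ : ℕ} {A : Type*} [Fintype A] [DecidableEq A]
    (μ : (Fin ℓ → A) → ℝ) (y : Fin ℓ × A → ℝ) :
    y ᵥ* slateGamma μ = ∑ s, (μ s * (y ⬝ᵥ slateInd s)) • slateInd s := by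
  simp only [slateGamma, Matrix.vecMul_sum, Matrix.vecMul_smul, Matrix.vecMul_vecMulVec, smul_smul]

/-- The left kernel of `Γ_μ` is orthogonal to the indicator of every slate in the support of `μ`,
since `yᵀ Γ_μ y` is the `μ`-weighted sum of the squares `(yᵀ 1_s)²`. -/
theorem dotProduct_slateInd_eq_zero {ℓ : ℕ} {A : Type*} [Fintype A] [DecidableEq A]
    {μ : (Fin ℓ → A) → ℝ} (hμ0 : ∀ s, 0 ≤ μ s) {y : Fin ℓ × A → ℝ}
    (hy : y ᵥ* slateGamma μ = 0) {s : Fin ℓ → A} (hs : 0 < μ s) :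
    y ⬝ᵥ slateInd s = 0 := by
  have h : ∑ t, μ t * (y ⬝ᵥ slateInd t) ^ 2 = 0 := by
    have h0 : (y ᵥ* slateGamma μ) ⬝ᵥ y = 0 := by rw [hy, zero_dotProduct]
    rw [vecMul_slateGamma, sum_dotProduct] at h0
    rw [← h0]
    refine Finset.sum_congr rfl fun t _ => ?_
    rw [smul_dotProduct, dotProduct_comm (slateInd t) y, smul_eq_mul]
    ring
  have h1 := (Finset.sum_eq_zero_iff_of_nonneg
    (fun t _ => mul_nonneg (hμ0 t) (sq_nonneg _))).1 h s (Finset.mem_univ s)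
  simpa [hs.ne'] using h1

theorem const_dotProduct_slateInd {ℓ : ℕ} (hℓ : 1 ≤ ℓ) {A : Type*} [Fintype A] [DecidableEq A]
    (s : Fin ℓ → A) : (fun _ => (ℓ : ℝ)⁻¹) ⬝ᵥ slateInd s = 1 := by
  have h : (ℓ : ℝ) ≠ 0 := by positivity
  simp [dotProduct, slateInd, Fintype.sum_prod_type, h]

/-- Pairing `Γ G 1_s` with the uniform vector `1/ℓ` gives `q_μᵀ G 1_s`, and `Γ G` fixes that pairing
on the support of `μ`. -/
theorem slateQ_dotProduct_mulVec_slateInd {ℓ : ℕ} (hℓ : 1 ≤ ℓ) {A : Type*} [Fintype A]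
    [DecidableEq A] {μ : (Fin ℓ → A) → ℝ} (hμ0 : ∀ s, 0 ≤ μ s)
    {G : Matrix (Fin ℓ × A) (Fin ℓ × A) ℝ}
    (hG : slateGamma μ * G * slateGamma μ = slateGamma μ) {s : Fin ℓ → A} (hs : 0 < μ s) :
    slateQ μ ⬝ᵥ G *ᵥ slateInd s = 1 := by
  set w : Fin ℓ × A → ℝ := fun _ => (ℓ : ℝ)⁻¹ with hw
  have hq : w ᵥ* slateGamma μ = slateQ μ := by
    rw [vecMul_slateGamma, slateQ]
    simp only [hw, const_dotProduct_slateInd hℓ, mul_one]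
  have hy : (w - w ᵥ* (slateGamma μ * G)) ᵥ* slateGamma μ = 0 := by
    rw [Matrix.sub_vecMul, Matrix.vecMul_vecMul, hG, sub_self]
  have h := dotProduct_slateInd_eq_zero hμ0 hy hs
  rw [sub_dotProduct, hw, const_dotProduct_slateInd hℓ, ← hw, ← Matrix.vecMul_vecMul, hq,
    ← Matrix.dotProduct_mulVec] at h
  linarith

/-- (Pseudoinverse estimator when the target policy equals the logging
policy.) If `π(·|x) = μ(·|x)` for all `x`, then `σ² = 1`, `ρ = 1` (as the maximum of
the relevant set), `q_{μ(·|x)}ᵀ G_x (r·1_s) = r` whenever `μ(s|x) > 0`, and the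
pseudoinverse estimator reduces to the empirical average of rewards. -/
theorem pi_estimator_on_policy
    {ℓ : ℕ} (hℓ : 1 ≤ ℓ) {A : Type*} [Fintype A] [DecidableEq A]
    {X : Type*} [Fintype X]
    (D : X → ℝ) (hD0 : ∀ x, 0 ≤ D x) (hD1 : ∑ x : X, D x = 1)
    (μ π : X → (Fin ℓ → A) → ℝ)
    (hμ0 : ∀ x s, 0 ≤ μ x s) (hμ1 : ∀ x, ∑ s : Fin ℓ → A, μ x s = 1)
    (hπ0 : ∀ x s, 0 ≤ π x s) (hπ1 : ∀ x, ∑ s : Fin ℓ → A, π x s = 1)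
    -- π(·|x) = μ(·|x) for every context x
    (hπμ : ∀ x, π x = μ x)
    -- G_x: Moore–Penrose pseudoinverse of Γ_x := Γ_{μ(·|x)}
    (G : X → Matrix (Fin ℓ × A) (Fin ℓ × A) ℝ)
    (hG1 : ∀ x, slateGamma (μ x) * G x * slateGamma (μ x) = slateGamma (μ x))
    (hG2 : ∀ x, G x * slateGamma (μ x) * G x = G x)
    (hG3 : ∀ x, (slateGamma (μ x) * G x)ᵀ = slateGamma (μ x) * G x)
    (hG4 : ∀ x, (G x * slateGamma (μ x))ᵀ = G x * slateGamma (μ x)) :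
    -- σ² := E_{x∼D}[ q_{π,x}ᵀ G_x q_{π,x} ] = 1
    (∑ x : X, D x * (slateQ (π x) ⬝ᵥ (G x).mulVec (slateQ (π x)))) = 1 ∧
    -- ρ := max over x ∈ supp D, s with μ(s|x) > 0 of |q_{π,x}ᵀ G_x 1_s| = 1
    IsGreatest {v : ℝ | ∃ (x : X) (s : Fin ℓ → A), 0 < D x ∧ 0 < μ x s ∧
        v = |slateQ (π x) ⬝ᵥ (G x).mulVec (slateInd s)|} 1 ∧
    -- q_{μ(·|x)}ᵀ G_x (r·1_s) = r for every x, every s with μ(s|x) > 0 and every real r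
    (∀ (x : X) (s : Fin ℓ → A) (r : ℝ), 0 < μ x s →
      slateQ (μ x) ⬝ᵥ (G x).mulVec (r • slateInd s) = r) ∧
    -- the estimator reduces to the empirical average of rewards
    (∀ (n : ℕ) (xs : Fin n → X) (ss : Fin n → (Fin ℓ → A)) (rs : Fin n → ℝ),
      (∀ i, 0 < μ (xs i) (ss i)) →
      (1 / (n : ℝ)) * ∑ i : Fin n,
          rs i * (slateQ (μ (xs i)) ⬝ᵥ (G (xs i)).mulVec (slateInd (ss i)))
        = (1 / (n : ℝ)) * ∑ i : Fin n, rs i) := by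
  have key : ∀ x s, 0 < μ x s → slateQ (μ x) ⬝ᵥ (G x).mulVec (slateInd s) = 1 :=
    fun x s hs => slateQ_dotProduct_mulVec_slateInd hℓ (hμ0 x) (hG1 x) hs
  refine ⟨?_, ⟨?_, ?_⟩, ?_, ?_⟩
  · rw [← hD1]
    refine Finset.sum_congr rfl fun x _ => ?_
    have hqq : slateQ (μ x) ⬝ᵥ (G x).mulVec (slateQ (μ x)) = 1 := by
      rw [← hμ1 x]
      conv_lhs => rw [show (G x).mulVec (slateQ (μ x))
        = ∑ s, μ x s • (G x).mulVec (slateInd s) by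
          simp only [slateQ, Matrix.mulVec_sum, Matrix.mulVec_smul]]
      rw [dotProduct_sum]
      refine Finset.sum_congr rfl fun s _ => ?_
      rw [dotProduct_smul, smul_eq_mul]
      rcases (hμ0 x s).eq_or_lt with h | h
      · rw [← h, zero_mul]
      · rw [key x s h, mul_one]
    rw [hπμ, hqq, mul_one]
  · -- `D` and `μ x` have total mass `1`, so both supports are nonempty.
    obtain ⟨x, -, hx⟩ := Finset.exists_lt_of_sum_lt (s := Finset.univ) (f := fun _ : X => (0 : ℝ))
      (g := D) (by simp [hD1])
    obtain ⟨s, -, hs⟩ := Finset.exists_lt_of_sum_lt (s := Finset.univ)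
      (f := fun _ : Fin ℓ → A => (0 : ℝ)) (g := μ x) (by simp [hμ1])
    exact ⟨x, s, hx, hs, by rw [hπμ, key x s hs, abs_one]⟩
  · rintro v ⟨x, s, -, hs, rfl⟩
    rw [hπμ, key x s hs, abs_one]
  · intro x s r hs
    rw [Matrix.mulVec_smul, dotProduct_smul, key x s hs, smul_eq_mul, mul_one]
  · intro n xs ss rs h
    simp only [key _ _ (h _), mul_one]
end

section
/- (Explicit pseudoinverse for the uniform distribution on a Cartesian product slate space.) Let ν be the uniform distribution over the slate space Π_j Fin m_j. Then the matrix G := Σ_j (m_j·I_j − 1_j 1_jᵀ) + (Σ_j 1/m_j)^{−2} · Σ_{j,k} (1_j 1_kᵀ)/(m_j m_k) is the Moore–Penrose pseudoinverse of Γ_ν, i.e., Γ_ν G Γ_ν = Γ_ν, G Γ_ν G = G, (Γ_ν G)ᵀ = Γ_ν G and (G Γ_ν)ᵀ = G Γ_ν. -/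
/-!
Write `u = Σ_j 1_j / m_j`, and let `P` be the orthogonal projection that subtracts from a vector its
mean over each slot. Under the uniform distribution distinct slots are independent, so
`Γ_ν = E P + u uᵀ` with `E = diag(1 / m_j)` (`cartGamma_uniform`), while
`G = M P + (uᵀu)⁻² u uᵀ` with `M = diag(m_j) = E⁻¹` (and `uᵀu = Σ_j 1 / m_j`).
Both `E` and `M` commute with `P`, and `P u = 0`, so the two summands act on orthogonal subspaces
and are inverted separately there; in particular `Γ_ν G = G Γ_ν = P + (uᵀu)⁻¹ u uᵀ`
is symmetric.
-/

open Matrix BigOperators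
open scoped Classical

/-- Indicator vector of a slate on a Cartesian product slate space,
indexed by pairs `(j, a)` with `a ∈ Fin (m j)`. -/
noncomputable def cartInd {ℓ : ℕ} {m : Fin ℓ → ℕ} (s : (j : Fin ℓ) → Fin (m j)) :
    (Σ j : Fin ℓ, Fin (m j)) → ℝ :=
  fun p => if s p.1 = p.2 then 1 else 0

/-- Second-moment matrix `Γ_μ := Σ_s μ(s)·1_s 1_sᵀ` of a distribution `μ`
on the Cartesian product slate space. -/
noncomputable def cartGamma {ℓ : ℕ} {m : Fin ℓ → ℕ}
    (μ : ((j : Fin ℓ) → Fin (m j)) → ℝ) :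
    Matrix (Σ j : Fin ℓ, Fin (m j)) (Σ j : Fin ℓ, Fin (m j)) ℝ :=
  ∑ s : (j : Fin ℓ) → Fin (m j), μ s • vecMulVec (cartInd s) (cartInd s)

/-- The 0/1 vector `1_j` supported on the coordinates of slot `j`. -/
noncomputable def cartOneJ {ℓ : ℕ} {m : Fin ℓ → ℕ} (j : Fin ℓ) :
    (Σ j : Fin ℓ, Fin (m j)) → ℝ :=
  fun p => if p.1 = j then 1 else 0

section Counting

variable {ℓ : ℕ} {m : Fin ℓ → ℕ}

/-- The factor at slot `j` of the indicator of `s p.1 = p.2`: trivial unless `j = p.1`. -/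
noncomputable def slotFactor (p : Σ j : Fin ℓ, Fin (m j)) (j : Fin ℓ) (a : Fin (m j)) : ℝ :=
  if p.1 = j then (if p = ⟨j, a⟩ then 1 else 0) else 1

lemma cartInd_eq_prod (s : (j : Fin ℓ) → Fin (m j)) (p : Σ j : Fin ℓ, Fin (m j)) :
    cartInd s p = ∏ j, slotFactor p j (s j) := by
  obtain ⟨i, a⟩ := p
  simp only [slotFactor, cartInd, Finset.prod_ite_eq, Finset.mem_univ, if_true]
  simp [eq_comm]

lemma sum_slotFactor (p : Σ j : Fin ℓ, Fin (m j)) (j : Fin ℓ) :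
    ∑ a, slotFactor p j a = if p.1 = j then 1 else (m j : ℝ) := by
  obtain ⟨i, b⟩ := p
  by_cases h : i = j
  · subst h
    simp [slotFactor]
  · simp [slotFactor, h]

lemma prod_ite_slot (hm : ∀ j, 1 ≤ m j) (i : Fin ℓ) :
    ∏ j, (if i = j then (1 : ℝ) else (m j : ℝ)) = (∏ j, (m j : ℝ)) * (m i : ℝ)⁻¹ := by
  have h : ∀ j, (if i = j then (1 : ℝ) else (m j : ℝ))
      = (m j : ℝ) * (if i = j then (m j : ℝ)⁻¹ else 1) := by
    intro j
    have : (m j : ℝ) ≠ 0 := by have := hm j; positivity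
    split_ifs <;> simp [this]
  simp only [h, Finset.prod_mul_distrib]
  simp

/-- The number of slates choosing a given action in one slot. -/
lemma sum_cartInd (hm : ∀ j, 1 ≤ m j) (p : Σ j : Fin ℓ, Fin (m j)) :
    ∑ s : (j : Fin ℓ) → Fin (m j), cartInd s p = (∏ j, (m j : ℝ)) * (m p.1 : ℝ)⁻¹ := by
  simp only [cartInd_eq_prod]
  rw [← Fintype.prod_sum]
  simp only [sum_slotFactor]
  exact prod_ite_slot hm p.1

/-- The number of slates choosing given actions in two distinct slots. -/
lemma sum_cartInd_mul (hm : ∀ j, 1 ≤ m j) (p q : Σ j : Fin ℓ, Fin (m j)) (hpq : p.1 ≠ q.1) :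
    ∑ s : (j : Fin ℓ) → Fin (m j), cartInd s p * cartInd s q
      = (∏ j, (m j : ℝ)) * ((m p.1 : ℝ)⁻¹ * (m q.1 : ℝ)⁻¹) := by
  simp only [cartInd_eq_prod, ← Finset.prod_mul_distrib]
  rw [← Fintype.prod_sum (fun j a => slotFactor p j a * slotFactor q j a)]
  have h : ∀ j, ∑ a, slotFactor p j a * slotFactor q j a
      = (if p.1 = j then (1 : ℝ) else (m j : ℝ)) * (if q.1 = j then (m j : ℝ)⁻¹ else 1) := by
    intro j
    have hj : (m j : ℝ) ≠ 0 := by have := hm j; positivity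
    by_cases hp : p.1 = j
    · have hq : q.1 ≠ j := fun h => hpq (hp.trans h.symm)
      have := sum_slotFactor p j
      simp_all [slotFactor]
    · have := sum_slotFactor q j
      by_cases hq : q.1 = j <;> simp_all [slotFactor]
  simp only [h, Finset.prod_mul_distrib, prod_ite_slot hm]
  simp [mul_assoc]

end Counting

section Decomposition

variable {ℓ : ℕ}

/-- The diagonal matrix `diag(f j)`, constant on each slot. -/
noncomputable def slotDiag (m : Fin ℓ → ℕ) (f : Fin ℓ → ℝ) :
    Matrix (Σ j : Fin ℓ, Fin (m j)) (Σ j : Fin ℓ, Fin (m j)) ℝ :=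
  Matrix.diagonal fun p => f p.1

/-- The projection onto the slotwise constant vectors: averaging over each slot. -/
noncomputable def slotAvg (m : Fin ℓ → ℕ) :
    Matrix (Σ j : Fin ℓ, Fin (m j)) (Σ j : Fin ℓ, Fin (m j)) ℝ :=
  Matrix.of fun p q => if p.1 = q.1 then (m p.1 : ℝ)⁻¹ else 0

/-- The matrix `u uᵀ` for `u = Σ_j 1_j / m_j`. -/
noncomputable def slotRankOne (m : Fin ℓ → ℕ) :
    Matrix (Σ j : Fin ℓ, Fin (m j)) (Σ j : Fin ℓ, Fin (m j)) ℝ :=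
  Matrix.of fun p q => (m p.1 : ℝ)⁻¹ * (m q.1 : ℝ)⁻¹

variable {m : Fin ℓ → ℕ}

lemma slotDiag_comm_slotAvg (f : Fin ℓ → ℝ) :
    slotDiag m f * slotAvg m = slotAvg m * slotDiag m f := by
  ext p q
  simp only [slotDiag, slotAvg, Matrix.diagonal_mul, Matrix.mul_diagonal, Matrix.of_apply]
  split_ifs with h
  · rw [h, mul_comm]
  · simp

lemma slotAvg_mul_self (hm : ∀ j, 1 ≤ m j) : slotAvg m * slotAvg m = slotAvg m := by
  ext p q
  have hp : (m p.1 : ℝ) ≠ 0 := by have := hm p.1; positivity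
  simp only [slotAvg, Matrix.mul_apply, Matrix.of_apply, Fintype.sum_sigma]
  simp
  split_ifs with h
  · rw [h] at hp ⊢
    field_simp
  · rfl

lemma slotAvg_mul_rankOne (hm : ∀ j, 1 ≤ m j) : slotAvg m * slotRankOne m = slotRankOne m := by
  ext p q
  have hp : (m p.1 : ℝ) ≠ 0 := by have := hm p.1; positivity
  simp only [slotAvg, slotRankOne, Matrix.mul_apply, Matrix.of_apply, Fintype.sum_sigma]
  simp [hp]

lemma slotRankOne_transpose : (slotRankOne m)ᵀ = slotRankOne m := by
  ext p q
  simp [slotRankOne, mul_comm]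

lemma slotAvg_transpose : (slotAvg m)ᵀ = slotAvg m := by
  ext p q
  simp only [slotAvg, Matrix.transpose_apply, Matrix.of_apply]
  by_cases h : p.1 = q.1
  · simp [h]
  · simp [h, Ne.symm h]

lemma rankOne_mul_slotAvg (hm : ∀ j, 1 ≤ m j) : slotRankOne m * slotAvg m = slotRankOne m := by
  have h := congrArg Matrix.transpose (slotAvg_mul_rankOne hm)
  rwa [Matrix.transpose_mul, slotAvg_transpose, slotRankOne_transpose] at h

/-- `(u uᵀ)² = (uᵀu) u uᵀ`, where `uᵀu = Σ_j m_j · m_j⁻² = Σ_j m_j⁻¹`. -/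
lemma rankOne_mul_self (hm : ∀ j, 1 ≤ m j) :
    slotRankOne m * slotRankOne m = (∑ j, (m j : ℝ)⁻¹) • slotRankOne m := by
  ext p q
  simp only [slotRankOne, Matrix.mul_apply, Matrix.of_apply, Fintype.sum_sigma,
    Matrix.smul_apply, smul_eq_mul, Finset.sum_const, Finset.card_univ, Fintype.card_fin,
    nsmul_eq_mul, Finset.sum_mul]
  refine Finset.sum_congr rfl fun j _ => ?_
  have hj : (m j : ℝ) ≠ 0 := by have := hm j; positivity
  field_simp

/-- The second-moment matrix of the uniform distribution splits into a part that vanishes on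
slotwise constant vectors and a rank-one part. -/
lemma cartGamma_uniform (hm : ∀ j, 1 ≤ m j) (ν : ((j : Fin ℓ) → Fin (m j)) → ℝ)
    (hν : ∀ s, ν s = ((Fintype.card ((j : Fin ℓ) → Fin (m j)) : ℝ))⁻¹) :
    cartGamma ν = slotDiag m (fun j => (m j : ℝ)⁻¹) * (1 - slotAvg m) + slotRankOne m := by
  have hcard : (Fintype.card ((j : Fin ℓ) → Fin (m j)) : ℝ) = ∏ j, (m j : ℝ) := by
    simp
  have hprod : (∏ j, (m j : ℝ)) ≠ 0 :=
    Finset.prod_ne_zero_iff.2 fun j _ => by have := hm j; positivity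
  ext p q
  have hL : cartGamma ν p q = (∏ j, (m j : ℝ))⁻¹ *
      ∑ s : (j : Fin ℓ) → Fin (m j), cartInd s p * cartInd s q := by
    simp only [cartGamma, hν, hcard, Matrix.sum_apply, Matrix.smul_apply, Matrix.vecMulVec_apply,
      smul_eq_mul, Finset.mul_sum]
  rw [hL]
  simp only [slotDiag, Matrix.add_apply, Matrix.diagonal_mul, Matrix.sub_apply, slotAvg,
    slotRankOne, Matrix.of_apply]
  by_cases h : p.1 = q.1
  · by_cases hpq : p = q
    · subst hpq
      have hsq : ∀ s : (j : Fin ℓ) → Fin (m j), cartInd s p * cartInd s p = cartInd s p := by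
        intro s
        simp [cartInd]
      simp only [hsq, sum_cartInd hm, Matrix.one_apply_eq, if_true]
      rw [inv_mul_cancel_left₀ hprod]
      ring
    · -- Two different actions in one slot are never chosen together.
      have hz : ∀ s : (j : Fin ℓ) → Fin (m j), cartInd s p * cartInd s q = 0 := by
        intro s
        obtain ⟨i, a⟩ := p
        obtain ⟨j, b⟩ := q
        obtain rfl : i = j := h
        have hab : a ≠ b := fun e => hpq (by rw [e])
        simp only [cartInd, mul_eq_zero, ite_eq_right_iff, one_ne_zero, imp_false]
        by_contra! hc
        exact hab (hc.1.symm.trans hc.2)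
      simp only [hz, Matrix.one_apply_ne hpq, h, if_true, Finset.sum_const_zero]
      ring
  · have hpq : p ≠ q := fun e => h (by rw [e])
    rw [sum_cartInd_mul hm p q h, inv_mul_cancel_left₀ hprod, Matrix.one_apply_ne hpq]
    simp [h]

lemma explicit_decomposition (hm : ∀ j, 1 ≤ m j) (c : ℝ) :
    (∑ j : Fin ℓ, ((m j : ℝ) • Matrix.diagonal (cartOneJ (m := m) j)
          - vecMulVec (cartOneJ j) (cartOneJ j)))
        + c • ∑ j : Fin ℓ, ∑ k : Fin ℓ,
              (((m j : ℝ) * (m k : ℝ))⁻¹) • vecMulVec (cartOneJ j) (cartOneJ k)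
      = slotDiag m (fun j => (m j : ℝ)) * (1 - slotAvg m) + c • slotRankOne m := by
  ext p q
  have hp : (m p.1 : ℝ) ≠ 0 := by have := hm p.1; positivity
  simp only [slotDiag, Matrix.add_apply, Matrix.diagonal_mul, Matrix.sub_apply, slotAvg,
    slotRankOne, Matrix.of_apply, Matrix.smul_apply, Matrix.sum_apply, Matrix.vecMulVec_apply,
    smul_eq_mul, cartOneJ]
  congr 1
  · by_cases hpq : p = q
    · subst hpq
      simp [hp, mul_sub, cartOneJ]
    · simp [hpq, hp, Matrix.diagonal_apply_ne, Matrix.one_apply_ne]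
  · simp [mul_comm]

end Decomposition

/-- If `A` and `N` are mutually inverse on the range of a symmetric idempotent `P`, and `U` is
symmetric with `U² = S U` and annihilated by `A` and `N`, then `A + U` and `N + S⁻² U` are
Moore–Penrose inverse to each other. -/
lemma pseudoinverse_of_orthogonal_sum {n : Type*} [Fintype n] (A N P U : Matrix n n ℝ) (S : ℝ)
    (hS : S ≠ 0) (hAN : A * N = P) (hNA : N * A = P) (hPA : P * A = A) (hPN : P * N = N)
    (hAU : A * U = 0) (hUA : U * A = 0) (hNU : N * U = 0) (hUN : U * N = 0)
    (hUU : U * U = S • U) (hPt : Pᵀ = P) (hUt : Uᵀ = U) :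
    (A + U) * (N + (S ^ 2)⁻¹ • U) * (A + U) = A + U ∧
    (N + (S ^ 2)⁻¹ • U) * (A + U) * (N + (S ^ 2)⁻¹ • U) = N + (S ^ 2)⁻¹ • U ∧
    ((A + U) * (N + (S ^ 2)⁻¹ • U))ᵀ = (A + U) * (N + (S ^ 2)⁻¹ • U) ∧
    ((N + (S ^ 2)⁻¹ • U) * (A + U))ᵀ = (N + (S ^ 2)⁻¹ • U) * (A + U) := by
  have hc : (S ^ 2)⁻¹ * S = S⁻¹ := by field_simp
  have hPU : P * U = 0 := by rw [← hAN, Matrix.mul_assoc, hNU, Matrix.mul_zero]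
  have h1 : (A + U) * (N + (S ^ 2)⁻¹ • U) = P + S⁻¹ • U := by
    simp [Matrix.add_mul, Matrix.mul_add, hAN, hAU, hUN, hUU, smul_smul, hc]
  have h2 : (N + (S ^ 2)⁻¹ • U) * (A + U) = P + S⁻¹ • U := by
    simp [Matrix.add_mul, Matrix.mul_add, hNA, hNU, hUA, hUU, smul_smul, hc]
  rw [h1, h2]
  refine ⟨?_, ?_, ?_, ?_⟩
  · simp [Matrix.add_mul, Matrix.mul_add, hPA, hPU, hUA, hUU, smul_smul, hS]
  · simp [Matrix.add_mul, Matrix.mul_add, hPN, hPU, hUN, hUU, smul_smul, hS]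
  · simp [hPt, hUt]
  · simp [hPt, hUt]

/-- (Explicit pseudoinverse for the uniform distribution on a Cartesian
product slate space.) With `ν` uniform over `Π_j Fin m_j`, the matrix
`G := Σ_j (m_j·I_j − 1_j 1_jᵀ) + (Σ_j 1/m_j)^{−2} · Σ_{j,k} (1_j 1_kᵀ)/(m_j m_k)`
is the Moore–Penrose pseudoinverse of `Γ_ν`. -/
theorem uniform_cartesian_pseudoinverse
    {ℓ : ℕ} (hℓ : 1 ≤ ℓ) (m : Fin ℓ → ℕ) (hm : ∀ j, 1 ≤ m j)
    (ν : ((j : Fin ℓ) → Fin (m j)) → ℝ)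
    (hν : ∀ s, ν s = ((Fintype.card ((j : Fin ℓ) → Fin (m j)) : ℝ))⁻¹)
    (G : Matrix (Σ j : Fin ℓ, Fin (m j)) (Σ j : Fin ℓ, Fin (m j)) ℝ)
    (hGdef : G =
      (∑ j : Fin ℓ, ((m j : ℝ) • Matrix.diagonal (cartOneJ j)
          - vecMulVec (cartOneJ j) (cartOneJ j)))
        + ((∑ j : Fin ℓ, ((m j : ℝ))⁻¹) ^ 2)⁻¹ •
            ∑ j : Fin ℓ, ∑ k : Fin ℓ,
              (((m j : ℝ) * (m k : ℝ))⁻¹) • vecMulVec (cartOneJ j) (cartOneJ k)) :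
    cartGamma ν * G * cartGamma ν = cartGamma ν ∧
    G * cartGamma ν * G = G ∧
    (cartGamma ν * G)ᵀ = cartGamma ν * G ∧
    (G * cartGamma ν)ᵀ = G * cartGamma ν := by
  subst hGdef
  rw [explicit_decomposition hm, cartGamma_uniform hm ν hν]
  have hpos : ∀ j, (0 : ℝ) < m j := fun j => by have := hm j; positivity
  have hS : (∑ j : Fin ℓ, (m j : ℝ)⁻¹) ≠ 0 :=
    (Finset.sum_pos (fun j _ => inv_pos.2 (hpos j)) ⟨⟨0, hℓ⟩, Finset.mem_univ _⟩).ne'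
  have hP : (1 - slotAvg m) * (1 - slotAvg m) = 1 - slotAvg m := by
    simp [mul_sub, sub_mul, slotAvg_mul_self hm]
  have hcomm : ∀ f : Fin ℓ → ℝ,
      slotDiag m f * (1 - slotAvg m) = (1 - slotAvg m) * slotDiag m f := fun f => by
    simp [mul_sub, sub_mul, slotDiag_comm_slotAvg]
  have hPU : (1 - slotAvg m) * slotRankOne m = 0 := by
    rw [sub_mul, one_mul, slotAvg_mul_rankOne hm, sub_self]
  have hUP : slotRankOne m * (1 - slotAvg m) = 0 := by
    rw [mul_sub, mul_one, rankOne_mul_slotAvg hm, sub_self]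
  have hinv : ∀ f g : Fin ℓ → ℝ, (∀ j, f j * g j = 1) →
      slotDiag m f * (1 - slotAvg m) * (slotDiag m g * (1 - slotAvg m)) = 1 - slotAvg m := by
    intro f g hfg
    have hd : slotDiag m f * slotDiag m g = 1 := by
      simp [slotDiag, hfg]
    rw [hcomm g, mul_assoc, ← mul_assoc (1 - slotAvg m), hP, ← hcomm g, ← mul_assoc, hd, one_mul]
  have hPD : ∀ f : Fin ℓ → ℝ, (1 - slotAvg m) * (slotDiag m f * (1 - slotAvg m))
      = slotDiag m f * (1 - slotAvg m) := fun f => by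
    rw [← mul_assoc, ← hcomm, mul_assoc, hP]
  have hDU : ∀ f : Fin ℓ → ℝ, slotDiag m f * (1 - slotAvg m) * slotRankOne m = 0 := fun f => by
    rw [mul_assoc, hPU, mul_zero]
  have hUD : ∀ f : Fin ℓ → ℝ, slotRankOne m * (slotDiag m f * (1 - slotAvg m)) = 0 := fun f => by
    rw [hcomm, ← mul_assoc, hUP, zero_mul]
  exact pseudoinverse_of_orthogonal_sum _ _ (1 - slotAvg m) _ _ hS
    (hinv _ _ fun j => inv_mul_cancel₀ (hpos j).ne') (hinv _ _ fun j => mul_inv_cancel₀ (hpos j).ne')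
    (hPD _) (hPD _) (hDU _) (hUD _) (hDU _) (hUD _) (rankOne_mul_self hm)
    (by rw [Matrix.transpose_sub, Matrix.transpose_one, slotAvg_transpose]) slotRankOne_transpose
end

section
/- (Pairwise slate form of the pseudoinverse for uniform Cartesian logging.) Let ν be the uniform distribution over the slate space Π_j Fin m_j and let G be the Moore–Penrose pseudoinverse of Γ_ν. Then for all slates s and s', 1_{s'}ᵀ G 1_s = 1 + Σ_j m_j·[s'_j = s_j] − ℓ (where [·] is the 0/1 indicator); in particular 1_sᵀ G 1_s = Σ_j m_j − ℓ + 1 for every slate s. -/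
/-!
The vectors `w_s(j, a) = m_j [s_j = a] - (ℓ - 1) / ℓ` satisfy `Γ_ν w_s = 1_s`
(`cartGamma_mulVec_cartDual`): under the uniform distribution the coordinates of a slate are
independent, so the `(k, b)` entry of `Γ_ν w_s` is
`E[[t_k = b] (∑_j m_j [s_j = t_j] - (ℓ - 1))] = ((ℓ - 1) + m_k [s_k = b] - (ℓ - 1)) / m_k`.
Since `Γ_ν` is symmetric and `Γ_ν G Γ_ν = Γ_ν`, this gives
`1_{s'}ᵀ G 1_s = w_{s'}ᵀ Γ_ν G Γ_ν w_s = w_{s'}ᵀ Γ_ν w_s = w_{s'}ᵀ 1_s`,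
which is the claimed expression.
-/

open Matrix BigOperators
open scoped Classical

/-- Under the uniform distribution, the event `t j = a` has probability `1 / m j` and is
independent of every function of the other coordinates. -/
lemma sum_indicator_mul_of_update_invariant {ℓ : ℕ} {m : Fin ℓ → ℕ} (j : Fin ℓ) (a : Fin (m j))
    (f : ((i : Fin ℓ) → Fin (m i)) → ℝ) (hf : ∀ t x, f (Function.update t j x) = f t) :
    (m j : ℝ) * ∑ t, (if t j = a then 1 else 0) * f t = ∑ t, f t := by
  -- Exchanging the values `a` and `x` in coordinate `j` preserves the sum.
  have key : ∀ x : Fin (m j), ∑ t : (i : Fin ℓ) → Fin (m i), (if t j = x then 1 else 0) * f t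
      = ∑ t, (if t j = a then 1 else 0) * f t := by
    intro x
    have hinv : Function.Involutive
        (fun t : (i : Fin ℓ) → Fin (m i) => Function.update t j (Equiv.swap a x (t j))) := by
      intro t
      simp
    refine Fintype.sum_equiv hinv.toPerm _ _ fun t => ?_
    have h : (Equiv.swap a x (t j) = a) ↔ t j = x := by
      rw [← Equiv.eq_symm_apply]
      simp
    simp only [Function.Involutive.coe_toPerm, Function.update_self, hf, h]
  calc (m j : ℝ) * ∑ t, (if t j = a then 1 else 0) * f t
      = ∑ x : Fin (m j), ∑ t : (i : Fin ℓ) → Fin (m i), (if t j = x then 1 else 0) * f t := by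
        simp only [key, Finset.sum_const, Finset.card_univ, Fintype.card_fin, nsmul_eq_mul]
    _ = ∑ t, f t := by
        rw [Finset.sum_comm]
        simp

/-- The vector `w_s(j, a) = m_j [s_j = a] - (ℓ - 1) / ℓ`, a preimage of `1_s` under `Γ_ν`
for uniform `ν`. -/
noncomputable def cartDual {ℓ : ℕ} {m : Fin ℓ → ℕ} (s : (j : Fin ℓ) → Fin (m j)) :
    (Σ j : Fin ℓ, Fin (m j)) → ℝ :=
  fun p => (m p.1 : ℝ) * (if s p.1 = p.2 then 1 else 0) - ((ℓ : ℝ) - 1) / ℓ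

lemma cartInd_dotProduct {ℓ : ℕ} {m : Fin ℓ → ℕ} (s : (j : Fin ℓ) → Fin (m j))
    (v : (Σ j : Fin ℓ, Fin (m j)) → ℝ) :
    cartInd s ⬝ᵥ v = ∑ j, v ⟨j, s j⟩ := by
  simp [dotProduct, cartInd, Fintype.sum_sigma]

lemma cartInd_dotProduct_cartDual {ℓ : ℕ} (hℓ : 1 ≤ ℓ) {m : Fin ℓ → ℕ}
    (s t : (j : Fin ℓ) → Fin (m j)) :
    cartInd t ⬝ᵥ cartDual s
      = (∑ j, (m j : ℝ) * (if s j = t j then 1 else 0)) - ((ℓ : ℝ) - 1) := by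
  have h : (ℓ : ℝ) ≠ 0 := by
    exact_mod_cast (show ℓ ≠ 0 by omega)
  rw [cartInd_dotProduct]
  simp only [cartDual, Finset.sum_sub_distrib, Finset.sum_const, Finset.card_univ,
    Fintype.card_fin, nsmul_eq_mul]
  rw [mul_div_cancel₀ _ h]

lemma cartGamma_mulVec {ℓ : ℕ} {m : Fin ℓ → ℕ} (μ : ((j : Fin ℓ) → Fin (m j)) → ℝ)
    (v : (Σ j : Fin ℓ, Fin (m j)) → ℝ) (p : Σ j : Fin ℓ, Fin (m j)) :
    (cartGamma μ *ᵥ v) p = ∑ t, μ t * (cartInd t p * (cartInd t ⬝ᵥ v)) := by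
  simp only [cartGamma, Matrix.sum_mulVec, Finset.sum_apply, Matrix.smul_mulVec,
    Matrix.vecMulVec_mulVec, Pi.smul_apply, smul_eq_mul]
  simp

lemma cartGamma_transpose {ℓ : ℕ} {m : Fin ℓ → ℕ} (μ : ((j : Fin ℓ) → Fin (m j)) → ℝ) :
    (cartGamma μ)ᵀ = cartGamma μ := by
  simp [cartGamma, Matrix.transpose_sum, Matrix.transpose_smul, Matrix.transpose_vecMulVec]

/-- The second-moment count: given `t k = b`, the slots `j ≠ k` each contribute `1` on average
to `∑ j, m j * [s j = t j]`, while slot `k` contributes exactly `m k * [s k = b]`. -/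
lemma sum_indicator_mul_agreement {ℓ : ℕ} {m : Fin ℓ → ℕ}
    (s : (j : Fin ℓ) → Fin (m j)) (k : Fin ℓ) (b : Fin (m k)) :
    (m k : ℝ) * ∑ t : (j : Fin ℓ) → Fin (m j), (if t k = b then 1 else 0) *
        ∑ j, (m j : ℝ) * (if s j = t j then 1 else 0)
      = (((ℓ : ℝ) - 1) + (m k : ℝ) * (if s k = b then 1 else 0))
        * Fintype.card ((j : Fin ℓ) → Fin (m j)) := by
  have hcount := sum_indicator_mul_of_update_invariant k b (fun _ => 1) (fun _ _ => rfl)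
  simp only [mul_one, Finset.sum_const, Finset.card_univ, nsmul_eq_mul] at hcount
  have hterm : ∀ j, (m k : ℝ) * ∑ t : (j : Fin ℓ) → Fin (m j), (if t k = b then 1 else 0) *
        ((m j : ℝ) * (if s j = t j then 1 else 0))
      = (if j = k then (m k : ℝ) * (if s k = b then 1 else 0) else 1)
        * Fintype.card ((j : Fin ℓ) → Fin (m j)) := by
    intro j
    by_cases hjk : j = k
    · subst hjk
      rw [if_pos rfl, ← hcount, mul_left_comm]
      congr 1
      rw [Finset.mul_sum]
      refine Finset.sum_congr rfl fun t _ => ?_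
      by_cases h : t j = b
      · simp [h]
      · simp [h]
    · have h1 := sum_indicator_mul_of_update_invariant j (s j)
        (fun t => if t k = b then (1 : ℝ) else 0)
        (fun t x => by simp [Function.update_of_ne (Ne.symm hjk)])
      rw [if_neg hjk, one_mul, ← hcount, ← h1]
      congr 1
      rw [Finset.mul_sum]
      refine Finset.sum_congr rfl fun t _ => ?_
      simp only [eq_comm (a := s j)]
      ring
  simp only [Finset.mul_sum (s := (Finset.univ : Finset (Fin ℓ)))]
  rw [Finset.sum_comm, Finset.mul_sum, Finset.sum_congr rfl fun j _ => hterm j,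
    ← Finset.sum_mul]
  congr 1
  rw [← Finset.add_sum_erase _ _ (Finset.mem_univ k), if_pos rfl,
    Finset.sum_congr rfl fun j hj =>
      if_neg (c := j = k) (t := (m k : ℝ) * (if s k = b then 1 else 0)) (e := 1)
        (Finset.ne_of_mem_erase hj)]
  simp only [Finset.sum_const, Finset.card_erase_of_mem (Finset.mem_univ k), Finset.card_univ,
    Fintype.card_fin, nsmul_eq_mul, mul_one]
  rw [Nat.cast_sub (Nat.one_le_iff_ne_zero.mpr (Fin.pos k).ne')]
  push_cast
  ring

lemma cartGamma_mulVec_cartDual {ℓ : ℕ} (hℓ : 1 ≤ ℓ) {m : Fin ℓ → ℕ} (hm : ∀ j, 1 ≤ m j)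
    (ν : ((j : Fin ℓ) → Fin (m j)) → ℝ)
    (hν : ∀ s, ν s = ((Fintype.card ((j : Fin ℓ) → Fin (m j)) : ℝ))⁻¹)
    (s : (j : Fin ℓ) → Fin (m j)) :
    cartGamma ν *ᵥ cartDual s = cartInd s := by
  funext p
  obtain ⟨k, b⟩ := p
  have hk : (m k : ℝ) ≠ 0 := by
    exact_mod_cast (Nat.one_le_iff_ne_zero.mp (hm k))
  have hc : (Fintype.card ((j : Fin ℓ) → Fin (m j)) : ℝ) ≠ 0 := by
    have : Nonempty ((j : Fin ℓ) → Fin (m j)) := ⟨s⟩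
    exact_mod_cast Fintype.card_ne_zero
  have hcount := sum_indicator_mul_of_update_invariant k b (fun _ => 1) (fun _ _ => rfl)
  simp only [mul_one, Finset.sum_const, Finset.card_univ, nsmul_eq_mul] at hcount
  have hagree := sum_indicator_mul_agreement s k b
  rw [cartGamma_mulVec]
  simp only [hν, cartInd_dotProduct_cartDual hℓ]
  simp only [cartInd]
  rw [← Finset.mul_sum]
  simp only [mul_sub (if _ then (1 : ℝ) else 0)]
  rw [Finset.sum_sub_distrib, inv_mul_eq_iff_eq_mul₀ hc]
  apply mul_left_cancel₀ hk
  simp only [← mul_sub (if _ then (1 : ℝ) else 0)]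
  rw [mul_sub, hagree, ← Finset.sum_mul, ← mul_assoc, hcount]
  ring

/-- (Pairwise slate form of the pseudoinverse for uniform Cartesian
logging.) With `ν` uniform and `G` the Moore–Penrose pseudoinverse of `Γ_ν`, for all
slates `s, s'`: `1_{s'}ᵀ G 1_s = 1 + Σ_j m_j·[s'_j = s_j] − ℓ`; in particular
`1_sᵀ G 1_s = Σ_j m_j − ℓ + 1`. -/
theorem uniform_cartesian_pairwise_form
    {ℓ : ℕ} (hℓ : 1 ≤ ℓ) (m : Fin ℓ → ℕ) (hm : ∀ j, 1 ≤ m j)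
    (ν : ((j : Fin ℓ) → Fin (m j)) → ℝ)
    (hν : ∀ s, ν s = ((Fintype.card ((j : Fin ℓ) → Fin (m j)) : ℝ))⁻¹)
    (G : Matrix (Σ j : Fin ℓ, Fin (m j)) (Σ j : Fin ℓ, Fin (m j)) ℝ)
    (hG1 : cartGamma ν * G * cartGamma ν = cartGamma ν)
    (hG2 : G * cartGamma ν * G = G)
    (hG3 : (cartGamma ν * G)ᵀ = cartGamma ν * G)
    (hG4 : (G * cartGamma ν)ᵀ = G * cartGamma ν) :
    (∀ s s' : (j : Fin ℓ) → Fin (m j),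
      cartInd s' ⬝ᵥ G.mulVec (cartInd s)
        = 1 + (∑ j : Fin ℓ, (m j : ℝ) * (if s' j = s j then 1 else 0)) - (ℓ : ℝ)) ∧
    (∀ s : (j : Fin ℓ) → Fin (m j),
      cartInd s ⬝ᵥ G.mulVec (cartInd s) = (∑ j : Fin ℓ, (m j : ℝ)) - (ℓ : ℝ) + 1) := by
  have main : ∀ s s' : (j : Fin ℓ) → Fin (m j),
      cartInd s' ⬝ᵥ G.mulVec (cartInd s)
        = 1 + (∑ j : Fin ℓ, (m j : ℝ) * (if s' j = s j then 1 else 0)) - (ℓ : ℝ) := by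
    intro s s'
    have hs := cartGamma_mulVec_cartDual hℓ hm ν hν s
    have hs' := cartGamma_mulVec_cartDual hℓ hm ν hν s'
    calc cartInd s' ⬝ᵥ G *ᵥ cartInd s
        = (cartDual s' ᵥ* cartGamma ν) ⬝ᵥ G *ᵥ (cartGamma ν *ᵥ cartDual s) := by
          rw [hs, ← cartGamma_transpose, Matrix.vecMul_transpose, hs']
      _ = cartDual s' ⬝ᵥ (cartGamma ν * G * cartGamma ν) *ᵥ cartDual s := by
          rw [← Matrix.dotProduct_mulVec, Matrix.mulVec_mulVec, Matrix.mulVec_mulVec,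
            Matrix.mul_assoc]
      _ = cartInd s ⬝ᵥ cartDual s' := by
          rw [hG1, hs, dotProduct_comm]
      _ = _ := by
          rw [cartInd_dotProduct_cartDual hℓ]
          ring
  refine ⟨main, fun s => ?_⟩
  rw [main s s]
  simp only [if_true, mul_one]
  ring
end

section
/- (Explicit pseudoinverse for the uniform distribution on rankings, case ℓ < m.) Let ℓ < m and let ν be the uniform distribution over rankings (injective functions Fin ℓ → Fin m). Then the matrix G := (1/ℓ² − (m−1)/(m(m−ℓ)))·1 1ᵀ + (m−1)·I − ((m−1)/m)·Σ_j 1_j 1_jᵀ + ((m−1)/(m−ℓ))·Σ_a 1_a 1_aᵀ is the Moore–Penrose pseudoinverse of Γ_ν, i.e., Γ_ν G Γ_ν = Γ_ν, G Γ_ν G = G, (Γ_ν G)ᵀ = Γ_ν G and (G Γ_ν)ᵀ = G Γ_ν. -/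
/-!
Write `N = 1 1ᵀ`, `P = Σ_j 1_j 1_jᵀ` and `Q = Σ_a 1_a 1_aᵀ`. As Kronecker products these are
`J ⊗ J`, `I ⊗ J` and `J ⊗ I`, so together with the identity they span a commutative algebra
(`rankN_mul_rankN` and the lemmas after it).

The uniform distribution is invariant under permuting the actions. Hence `ν(s j = a) = 1/m`, and
`ν(s j = a, s k = b) = 1/(m(m-1))` for `j ≠ k`, `a ≠ b`, which gives
`Γ = (1/(m-1)) I + (1/(m(m-1))) (N - P - Q)` (`rankGammaUnif_eq`).

Multiplying out in the algebra, `Γ G = G Γ = I - P/m + N/(ℓ m)`. This matrix is symmetric and acts as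
the identity on both `Γ` and `G`, which is the content of the four Penrose conditions.
-/

open Matrix BigOperators
open scoped Classical

/-- Indicator vector of a slate `s : Fin ℓ → Fin m` in `ℝ^{(Fin ℓ) × (Fin m)}`. -/
noncomputable def rankInd {ℓ m : ℕ} (s : Fin ℓ → Fin m) : Fin ℓ × Fin m → ℝ :=
  fun p => if s p.1 = p.2 then 1 else 0

/-- Second-moment matrix `Γ_ν := Σ_s ν(s)·1_s 1_sᵀ` of the uniform distribution `ν`
over rankings (injective functions `Fin ℓ → Fin m`). -/
noncomputable def rankGammaUnif (ℓ m : ℕ) :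
    Matrix (Fin ℓ × Fin m) (Fin ℓ × Fin m) ℝ :=
  ∑ s : {s : Fin ℓ → Fin m // Function.Injective s},
    ((Fintype.card {s : Fin ℓ → Fin m // Function.Injective s} : ℝ))⁻¹ •
      vecMulVec (rankInd s.1) (rankInd s.1)

/-- The 0/1 vector `1_j` supported on all coordinates `(j,a)` of slot `j`. -/
noncomputable def rankOneJ {ℓ m : ℕ} (j : Fin ℓ) : Fin ℓ × Fin m → ℝ :=
  fun p => if p.1 = j then 1 else 0

/-- The 0/1 vector `1_a` supported on all coordinates `(j,a)` for the fixed action `a`. -/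
noncomputable def rankOneA {ℓ m : ℕ} (a : Fin m) : Fin ℓ × Fin m → ℝ :=
  fun p => if p.2 = a then 1 else 0

/-- The all-ones vector. -/
noncomputable def rankOnes (ℓ m : ℕ) : Fin ℓ × Fin m → ℝ := fun _ => 1

/-- The matrix `1 1ᵀ`. -/
def rankN (ℓ m : ℕ) : Matrix (Fin ℓ × Fin m) (Fin ℓ × Fin m) ℝ := fun _ _ => 1

/-- The matrix `Σ_j 1_j 1_jᵀ`, given by its entries. -/
noncomputable def rankP (ℓ m : ℕ) : Matrix (Fin ℓ × Fin m) (Fin ℓ × Fin m) ℝ :=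
  fun p q => if p.1 = q.1 then 1 else 0

/-- The matrix `Σ_a 1_a 1_aᵀ`, given by its entries. -/
noncomputable def rankQ (ℓ m : ℕ) : Matrix (Fin ℓ × Fin m) (Fin ℓ × Fin m) ℝ :=
  fun p q => if p.2 = q.2 then 1 else 0

lemma vecMulVec_rankOnes (ℓ m : ℕ) :
    vecMulVec (rankOnes ℓ m) (rankOnes ℓ m) = rankN ℓ m := by
  ext p q
  simp [vecMulVec_apply, rankOnes, rankN]

lemma sum_vecMulVec_rankOneJ (ℓ m : ℕ) :
    ∑ j : Fin ℓ, vecMulVec (rankOneJ (m := m) j) (rankOneJ j) = rankP ℓ m := by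
  ext p q
  simp [Matrix.sum_apply, vecMulVec_apply, rankOneJ, rankP, eq_comm]

lemma sum_vecMulVec_rankOneA (ℓ m : ℕ) :
    ∑ a : Fin m, vecMulVec (rankOneA (ℓ := ℓ) a) (rankOneA a) = rankQ ℓ m := by
  ext p q
  simp [Matrix.sum_apply, vecMulVec_apply, rankOneA, rankQ, eq_comm]

lemma rankN_mul_rankN (ℓ m : ℕ) : rankN ℓ m * rankN ℓ m = ((ℓ : ℝ) * m) • rankN ℓ m := by
  ext p q
  simp [Matrix.mul_apply, rankN]

lemma rankN_mul_rankP (ℓ m : ℕ) : rankN ℓ m * rankP ℓ m = (m : ℝ) • rankN ℓ m := by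
  ext p q
  rw [Matrix.mul_apply, Fintype.sum_prod_type_right]
  simp [rankN, rankP]

lemma rankP_mul_rankN (ℓ m : ℕ) : rankP ℓ m * rankN ℓ m = (m : ℝ) • rankN ℓ m := by
  ext p q
  rw [Matrix.mul_apply, Fintype.sum_prod_type_right]
  simp [rankN, rankP]

lemma rankN_mul_rankQ (ℓ m : ℕ) : rankN ℓ m * rankQ ℓ m = (ℓ : ℝ) • rankN ℓ m := by
  ext p q
  rw [Matrix.mul_apply, Fintype.sum_prod_type]
  simp [rankN, rankQ]

lemma rankQ_mul_rankN (ℓ m : ℕ) : rankQ ℓ m * rankN ℓ m = (ℓ : ℝ) • rankN ℓ m := by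
  ext p q
  rw [Matrix.mul_apply, Fintype.sum_prod_type]
  simp [rankN, rankQ]

lemma rankP_mul_rankP (ℓ m : ℕ) : rankP ℓ m * rankP ℓ m = (m : ℝ) • rankP ℓ m := by
  ext p q
  rw [Matrix.mul_apply, Fintype.sum_prod_type_right]
  by_cases h : p.1 = q.1 <;> simp [rankP, h]

lemma rankQ_mul_rankQ (ℓ m : ℕ) : rankQ ℓ m * rankQ ℓ m = (ℓ : ℝ) • rankQ ℓ m := by
  ext p q
  rw [Matrix.mul_apply, Fintype.sum_prod_type]
  by_cases h : p.2 = q.2 <;> simp [rankQ, h]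

lemma rankP_mul_rankQ (ℓ m : ℕ) : rankP ℓ m * rankQ ℓ m = rankN ℓ m := by
  ext p q
  rw [Matrix.mul_apply, Fintype.sum_prod_type]
  simp [rankN, rankP, rankQ]

lemma rankQ_mul_rankP (ℓ m : ℕ) : rankQ ℓ m * rankP ℓ m = rankN ℓ m := by
  ext p q
  rw [Matrix.mul_apply, Fintype.sum_prod_type]
  simp [rankN, rankP, rankQ]

/-- The set of rankings is invariant under relabelling the actions. -/
lemma sum_ranking_perm {ℓ m : ℕ} (σ : Equiv.Perm (Fin m)) (F : (Fin ℓ → Fin m) → ℝ) :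
    ∑ s : {s : Fin ℓ → Fin m // Function.Injective s}, F (σ ∘ s.1) =
      ∑ s : {s : Fin ℓ → Fin m // Function.Injective s}, F s.1 := by
  let e : {s : Fin ℓ → Fin m // Function.Injective s} ≃
      {s : Fin ℓ → Fin m // Function.Injective s} :=
    { toFun := fun s => ⟨σ ∘ s.1, σ.injective.comp s.2⟩
      invFun := fun s => ⟨σ.symm ∘ s.1, σ.symm.injective.comp s.2⟩
      left_inv := fun s => by ext; simp
      right_inv := fun s => by ext; simp }
  exact e.sum_comp (fun s => F s.1)

/-- Each action occupies slot `j` in a fraction `1/m` of the rankings. -/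
lemma count_one {ℓ m : ℕ} (j : Fin ℓ) (a : Fin m) :
    (m : ℝ) * ∑ s : {s : Fin ℓ → Fin m // Function.Injective s},
        (if s.1 j = a then (1 : ℝ) else 0) =
      Fintype.card {s : Fin ℓ → Fin m // Function.Injective s} := by
  have hconst : ∀ b : Fin m,
      ∑ s : {s : Fin ℓ → Fin m // Function.Injective s}, (if s.1 j = b then (1 : ℝ) else 0) =
      ∑ s : {s : Fin ℓ → Fin m // Function.Injective s}, (if s.1 j = a then (1 : ℝ) else 0) := by
    intro b
    rw [← sum_ranking_perm (Equiv.swap a b) (fun s => if s j = b then (1 : ℝ) else 0)]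
    refine Finset.sum_congr rfl fun s _ => ?_
    simp [← Equiv.eq_symm_apply]
  have hsum : ∑ b : Fin m, ∑ s : {s : Fin ℓ → Fin m // Function.Injective s},
      (if s.1 j = b then (1 : ℝ) else 0) =
      Fintype.card {s : Fin ℓ → Fin m // Function.Injective s} := by
    rw [Finset.sum_comm]
    simp
  simpa [hconst] using hsum

/-- Given that action `a` occupies slot `j`, each of the other `m - 1` actions occupies a second
slot `k` equally often. -/
lemma count_two {ℓ m : ℕ} {j k : Fin ℓ} (hjk : j ≠ k) {a b : Fin m} (hab : a ≠ b) :
    ((m : ℝ) - 1) * ∑ s : {s : Fin ℓ → Fin m // Function.Injective s},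
        (if s.1 j = a then (1 : ℝ) else 0) * (if s.1 k = b then (1 : ℝ) else 0) =
      ∑ s : {s : Fin ℓ → Fin m // Function.Injective s},
        (if s.1 j = a then (1 : ℝ) else 0) := by
  have hconst : ∀ c ∈ Finset.univ.erase a,
      ∑ s : {s : Fin ℓ → Fin m // Function.Injective s},
        (if s.1 j = a then (1 : ℝ) else 0) * (if s.1 k = c then (1 : ℝ) else 0) =
      ∑ s : {s : Fin ℓ → Fin m // Function.Injective s},
        (if s.1 j = a then (1 : ℝ) else 0) * (if s.1 k = b then (1 : ℝ) else 0) := by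
    intro c hc
    have hca : c ≠ a := Finset.ne_of_mem_erase hc
    rw [← sum_ranking_perm (Equiv.swap b c)
      (fun s => (if s j = a then (1 : ℝ) else 0) * (if s k = c then (1 : ℝ) else 0))]
    refine Finset.sum_congr rfl fun s _ => ?_
    simp only [Function.comp, ← Equiv.eq_symm_apply, Equiv.symm_swap, Equiv.swap_apply_right,
      Equiv.swap_apply_of_ne_of_ne hab hca.symm]
  have hdiag : ∑ s : {s : Fin ℓ → Fin m // Function.Injective s},
      (if s.1 j = a then (1 : ℝ) else 0) * (if s.1 k = a then (1 : ℝ) else 0) = 0 := by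
    refine Finset.sum_eq_zero fun s _ => ?_
    by_cases h : s.1 j = a
    · have : s.1 k ≠ a := fun h' => hjk (s.2 (h.trans h'.symm))
      simp [this]
    · simp [h]
  have hsum : ∑ c : Fin m, ∑ s : {s : Fin ℓ → Fin m // Function.Injective s},
      (if s.1 j = a then (1 : ℝ) else 0) * (if s.1 k = c then (1 : ℝ) else 0) =
      ∑ s : {s : Fin ℓ → Fin m // Function.Injective s},
        (if s.1 j = a then (1 : ℝ) else 0) := by
    rw [Finset.sum_comm]
    refine Finset.sum_congr rfl fun s _ => ?_
    rw [← Finset.mul_sum]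
    simp
  rw [← Finset.add_sum_erase _ _ (Finset.mem_univ a), hdiag, zero_add,
    Finset.sum_congr rfl hconst, Finset.sum_const, Finset.card_erase_of_mem (Finset.mem_univ a),
    Finset.card_univ, Fintype.card_fin, nsmul_eq_mul,
    Nat.cast_sub (Nat.one_le_of_lt a.pos), Nat.cast_one] at hsum
  exact hsum

lemma rankGammaUnif_eq {ℓ m : ℕ} (hℓ : 1 ≤ ℓ) (hlm : ℓ < m) :
    rankGammaUnif ℓ m =
      (1 / ((m : ℝ) - 1)) • (1 : Matrix (Fin ℓ × Fin m) (Fin ℓ × Fin m) ℝ)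
        + (1 / ((m : ℝ) * ((m : ℝ) - 1))) • (rankN ℓ m - rankP ℓ m - rankQ ℓ m) := by
  have hℓ' : (1 : ℝ) ≤ ℓ := by exact_mod_cast hℓ
  have hlm' : (ℓ : ℝ) < m := by exact_mod_cast hlm
  have hm : (m : ℝ) ≠ 0 := by linarith
  have hm1 : (m : ℝ) - 1 ≠ 0 := by linarith
  have : Nonempty {s : Fin ℓ → Fin m // Function.Injective s} :=
    ⟨⟨Fin.castLE hlm.le, Fin.castLE_injective hlm.le⟩⟩
  have hcard : (Fintype.card {s : Fin ℓ → Fin m // Function.Injective s} : ℝ) ≠ 0 := by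
    exact_mod_cast Fintype.card_ne_zero
  ext ⟨j, a⟩ ⟨k, b⟩
  have hentry : rankGammaUnif ℓ m (j, a) (k, b) =
      (Fintype.card {s : Fin ℓ → Fin m // Function.Injective s} : ℝ)⁻¹ *
        ∑ s : {s : Fin ℓ → Fin m // Function.Injective s},
          (if s.1 j = a then (1 : ℝ) else 0) * (if s.1 k = b then (1 : ℝ) else 0) := by
    rw [rankGammaUnif, ← Finset.smul_sum, Matrix.smul_apply, Matrix.sum_apply, smul_eq_mul]
    rfl
  have h1 := count_one j a
  rw [hentry]
  simp only [Matrix.add_apply, Matrix.smul_apply, Matrix.sub_apply, rankN, rankP, rankQ,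
    Matrix.one_apply, Prod.mk.injEq, smul_eq_mul]
  by_cases hjk : j = k
  · subst hjk
    by_cases hab : a = b
    · subst hab
      have hs : ∀ s : {s : Fin ℓ → Fin m // Function.Injective s},
          (if s.1 j = a then (1 : ℝ) else 0) * (if s.1 j = a then (1 : ℝ) else 0) =
          (if s.1 j = a then (1 : ℝ) else 0) := fun s => by split_ifs <;> simp
      simp only [hs, and_self, if_true]
      rw [← h1] at hcard ⊢
      have hS := right_ne_zero_of_mul hcard
      field_simp
      ring
    · have hs : ∀ s : {s : Fin ℓ → Fin m // Function.Injective s},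
          (if s.1 j = a then (1 : ℝ) else 0) * (if s.1 j = b then (1 : ℝ) else 0) = 0 := by
        intro s
        by_cases h : s.1 j = a
        · simp [h, hab]
        · simp [h]
      simp [hs, hab]
  · by_cases hab : a = b
    · subst hab
      have hs : ∀ s : {s : Fin ℓ → Fin m // Function.Injective s},
          (if s.1 j = a then (1 : ℝ) else 0) * (if s.1 k = a then (1 : ℝ) else 0) = 0 := by
        intro s
        by_cases h : s.1 j = a
        · have : s.1 k ≠ a := fun h' => hjk (s.2 (h.trans h'.symm))
          simp [this]
        · simp [h]
      simp [hs, hjk]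
    · have h2 := count_two hjk hab
      rw [← h2] at h1
      rw [← h1] at hcard ⊢
      have hS := right_ne_zero_of_mul (right_ne_zero_of_mul hcard)
      simp only [hjk, hab, false_and, if_false]
      field_simp
      ring

/-- (Explicit pseudoinverse for the uniform distribution on rankings,
case ℓ < m.) The matrix
`G := (1/ℓ² − (m−1)/(m(m−ℓ)))·1 1ᵀ + (m−1)·I − ((m−1)/m)·Σ_j 1_j 1_jᵀ
      + ((m−1)/(m−ℓ))·Σ_a 1_a 1_aᵀ`
is the Moore–Penrose pseudoinverse of `Γ_ν`. -/
theorem uniform_ranking_pseudoinverse_lt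
    {ℓ m : ℕ} (hℓ : 1 ≤ ℓ) (hlm : ℓ < m)
    (G : Matrix (Fin ℓ × Fin m) (Fin ℓ × Fin m) ℝ)
    (hGdef : G =
      (1 / (ℓ : ℝ) ^ 2 - ((m : ℝ) - 1) / ((m : ℝ) * ((m : ℝ) - (ℓ : ℝ)))) •
          vecMulVec (rankOnes ℓ m) (rankOnes ℓ m)
        + ((m : ℝ) - 1) • (1 : Matrix (Fin ℓ × Fin m) (Fin ℓ × Fin m) ℝ)
        - (((m : ℝ) - 1) / (m : ℝ)) • ∑ j : Fin ℓ, vecMulVec (rankOneJ j) (rankOneJ j)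
        + (((m : ℝ) - 1) / ((m : ℝ) - (ℓ : ℝ))) •
            ∑ a : Fin m, vecMulVec (rankOneA a) (rankOneA a)) :
    rankGammaUnif ℓ m * G * rankGammaUnif ℓ m = rankGammaUnif ℓ m ∧
    G * rankGammaUnif ℓ m * G = G ∧
    (rankGammaUnif ℓ m * G)ᵀ = rankGammaUnif ℓ m * G ∧
    (G * rankGammaUnif ℓ m)ᵀ = G * rankGammaUnif ℓ m := by
  have hℓ' : (1 : ℝ) ≤ ℓ := by exact_mod_cast hℓ
  have hlm' : (ℓ : ℝ) < m := by exact_mod_cast hlm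
  have hℓ0 : (ℓ : ℝ) ≠ 0 := by linarith
  have hm : (m : ℝ) ≠ 0 := by linarith
  have hm1 : (m : ℝ) - 1 ≠ 0 := by linarith
  have hml : (m : ℝ) - ℓ ≠ 0 := by linarith
  rw [vecMulVec_rankOnes, sum_vecMulVec_rankOneJ, sum_vecMulVec_rankOneA] at hGdef
  have hΓ := rankGammaUnif_eq hℓ hlm
  -- The common value of `Γ G` and `G Γ`: the orthogonal projection onto the range of `Γ`.
  obtain ⟨E, hE⟩ : ∃ E, E = (1 : Matrix (Fin ℓ × Fin m) (Fin ℓ × Fin m) ℝ)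
      - (1 / (m : ℝ)) • rankP ℓ m + (1 / ((ℓ : ℝ) * m)) • rankN ℓ m := ⟨_, rfl⟩
  have hΓG : rankGammaUnif ℓ m * G = E := by
    rw [hΓ, hGdef, hE]
    simp only [add_mul, mul_add, sub_mul, mul_sub, smul_mul_assoc, mul_smul_comm, one_mul, mul_one,
      rankN_mul_rankN, rankN_mul_rankP, rankP_mul_rankN, rankN_mul_rankQ, rankQ_mul_rankN,
      rankP_mul_rankP, rankQ_mul_rankQ, rankP_mul_rankQ, rankQ_mul_rankP]
    match_scalars <;> field_simp <;> ring
  have hGΓ : G * rankGammaUnif ℓ m = E := by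
    rw [hΓ, hGdef, hE]
    simp only [add_mul, mul_add, sub_mul, mul_sub, smul_mul_assoc, mul_smul_comm, one_mul, mul_one,
      rankN_mul_rankN, rankN_mul_rankP, rankP_mul_rankN, rankN_mul_rankQ, rankQ_mul_rankN,
      rankP_mul_rankP, rankQ_mul_rankQ, rankP_mul_rankQ, rankQ_mul_rankP]
    match_scalars <;> field_simp <;> ring
  have hEΓ : E * rankGammaUnif ℓ m = rankGammaUnif ℓ m := by
    rw [hΓ, hE]
    simp only [add_mul, mul_add, sub_mul, mul_sub, smul_mul_assoc, mul_smul_comm, one_mul, mul_one,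
      rankN_mul_rankN, rankN_mul_rankP, rankP_mul_rankN, rankN_mul_rankQ,
      rankP_mul_rankP, rankP_mul_rankQ]
    match_scalars <;> field_simp <;> ring
  have hEG : E * G = G := by
    rw [hGdef, hE]
    simp only [add_mul, mul_add, sub_mul, mul_sub, smul_mul_assoc, mul_smul_comm, one_mul, mul_one,
      rankN_mul_rankN, rankN_mul_rankP, rankP_mul_rankN, rankN_mul_rankQ,
      rankP_mul_rankP, rankP_mul_rankQ]
    match_scalars <;> field_simp <;> ring
  have hEt : Eᵀ = E := by
    rw [hE]
    ext p q
    simp [rankP, rankN, Matrix.one_apply, eq_comm]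
  rw [hΓG, hGΓ]
  exact ⟨hEΓ, hEG, hEt, hEt⟩
end

section
/- (Pairwise slate form of the pseudoinverse for uniform ranking logging, case ℓ < m.) Let ℓ < m, let ν be the uniform distribution over rankings (injective functions Fin ℓ → Fin m), and let G be the Moore–Penrose pseudoinverse of Γ_ν. Then for all rankings s and s', 1_{s'}ᵀ G 1_s = 1 − ℓ(m−1)/(m−ℓ) + (m−1)·|{j : s'_j = s_j}| + ((m−1)/(m−ℓ))·|range(s) ∩ range(s')|; in particular 1_sᵀ G 1_s = m·ℓ − ℓ + 1 for every ranking s. -/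
/-!
Every slate indicator lies in the range of `Γ = rankGammaUnif ℓ m`: there is an explicit
`rankPre s` with `Γ (rankPre s) = 1_s` (`rankGammaUnif_mulVec_rankPre`). Since `Γ` is symmetric and
`Γ G Γ = Γ`, it follows that `1_{s'}ᵀ G 1_s = (rankPre s')ᵀ Γ G Γ (rankPre s) = 1_{s'}ᵀ rankPre s`,
which is evaluated directly by counting agreements and common actions.

The identity `Γ (rankPre s) = 1_s` rests on the closed form of `Γ` (`rankGammaUnif_apply`): the entry
at `(j,a), (k,b)` is the probability that `s j = a` and `s k = b`, namely `1/m` if `(j,a) = (k,b)`,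
`0` if exactly one of the two coordinates agrees, and `1/(m(m-1))` otherwise. These values come from
the invariance of the uniform distribution under permutations of the actions, together with the
fact that the marginals sum correctly; no count of the injective functions is needed.
-/

open Matrix BigOperators
open scoped Classical

/-- The type of rankings: injective functions `Fin ℓ → Fin m`. -/
abbrev Ranking (ℓ m : ℕ) := {s : Fin ℓ → Fin m // Function.Injective s}

lemma rankGammaUnif_apply_sum {ℓ m : ℕ} (p q : Fin ℓ × Fin m) :
    rankGammaUnif ℓ m p q =
      ∑ s : Ranking ℓ m, (Fintype.card (Ranking ℓ m) : ℝ)⁻¹ * (rankInd s.1 p * rankInd s.1 q) := by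
  simp [rankGammaUnif, Matrix.sum_apply, vecMulVec_apply]

lemma rankGammaUnif_transpose (ℓ m : ℕ) : (rankGammaUnif ℓ m)ᵀ = rankGammaUnif ℓ m := by
  ext p q
  rw [transpose_apply, rankGammaUnif_apply_sum, rankGammaUnif_apply_sum]
  exact Finset.sum_congr rfl fun s _ => by ring

/-- Post-composition with a permutation `σ` of the actions permutes the rankings, so relabelling
actions by `σ` leaves `Γ` unchanged. -/
lemma rankGammaUnif_perm {ℓ m : ℕ} (σ : Equiv.Perm (Fin m)) (j k : Fin ℓ) (a b : Fin m) :
    rankGammaUnif ℓ m (j, σ a) (k, σ b) = rankGammaUnif ℓ m (j, a) (k, b) := by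
  rw [rankGammaUnif_apply_sum, rankGammaUnif_apply_sum]
  let e : Ranking ℓ m ≃ Ranking ℓ m :=
    { toFun := fun s => ⟨σ.symm ∘ s.1, σ.symm.injective.comp s.2⟩
      invFun := fun s => ⟨σ ∘ s.1, σ.injective.comp s.2⟩
      left_inv := fun s => by ext; simp
      right_inv := fun s => by ext; simp }
  refine Fintype.sum_equiv e _ _ fun s => ?_
  simp [e, rankInd, Equiv.symm_apply_eq]

lemma rankInd_sum_action {ℓ m : ℕ} (s : Fin ℓ → Fin m) (j : Fin ℓ) :
    ∑ a, rankInd s (j, a) = 1 := by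
  simp [rankInd]

/-- Marginalizing the action of the second slot. -/
lemma rankGammaUnif_sum_right {ℓ m : ℕ} (j k : Fin ℓ) (a : Fin m) :
    ∑ b, rankGammaUnif ℓ m (j, a) (k, b) = rankGammaUnif ℓ m (j, a) (j, a) := by
  simp_rw [rankGammaUnif_apply_sum]
  rw [Finset.sum_comm]
  refine Finset.sum_congr rfl fun s _ => ?_
  rw [← Finset.mul_sum, ← Finset.mul_sum, rankInd_sum_action]
  by_cases h : s.1 j = a <;> simp [rankInd, h]

lemma rankGammaUnif_diag {ℓ m : ℕ} (hlm : ℓ < m) (j : Fin ℓ) (a : Fin m) :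
    rankGammaUnif ℓ m (j, a) (j, a) = (m : ℝ)⁻¹ := by
  have hm : (m : ℝ) ≠ 0 := by
    have : m ≠ 0 := by omega
    exact_mod_cast this
  have hne : Nonempty (Ranking ℓ m) := ⟨⟨Fin.castLE hlm.le, Fin.castLE_injective _⟩⟩
  have hN : (Fintype.card (Ranking ℓ m) : ℝ) ≠ 0 := by
    exact_mod_cast Fintype.card_ne_zero
  have hsum : ∑ b, rankGammaUnif ℓ m (j, b) (j, b) = 1 := by
    simp_rw [rankGammaUnif_apply_sum]
    rw [Finset.sum_comm]
    have h : ∀ s : Ranking ℓ m, ∑ b, (Fintype.card (Ranking ℓ m) : ℝ)⁻¹ *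
        (rankInd s.1 (j, b) * rankInd s.1 (j, b)) = (Fintype.card (Ranking ℓ m) : ℝ)⁻¹ := by
      intro s
      simp [rankInd]
    rw [Finset.sum_congr rfl fun s _ => h s, Finset.sum_const, nsmul_eq_mul, Finset.card_univ]
    exact mul_inv_cancel₀ hN
  have hconst : ∀ b, rankGammaUnif ℓ m (j, b) (j, b) = rankGammaUnif ℓ m (j, a) (j, a) := by
    intro b
    have h := rankGammaUnif_perm (Equiv.swap a b) j j a a
    rwa [Equiv.swap_apply_left] at h
  rw [Finset.sum_congr rfl fun b _ => hconst b, Finset.sum_const, nsmul_eq_mul] at hsum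
  simp only [Finset.card_univ, Fintype.card_fin] at hsum
  field_simp
  linarith

lemma rankGammaUnif_same_slot {ℓ m : ℕ} (j : Fin ℓ) {a b : Fin m} (hab : a ≠ b) :
    rankGammaUnif ℓ m (j, a) (j, b) = 0 := by
  rw [rankGammaUnif_apply_sum]
  refine Finset.sum_eq_zero fun s _ => ?_
  simp only [rankInd]
  split_ifs with h1 h2
  · exact absurd (h1.symm.trans h2) hab
  all_goals simp

lemma rankGammaUnif_same_action {ℓ m : ℕ} {j k : Fin ℓ} (hjk : j ≠ k) (a : Fin m) :
    rankGammaUnif ℓ m (j, a) (k, a) = 0 := by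
  rw [rankGammaUnif_apply_sum]
  refine Finset.sum_eq_zero fun s _ => ?_
  simp only [rankInd]
  split_ifs with h1 h2
  · exact absurd (s.2 (h1.trans h2.symm)) hjk
  all_goals simp

lemma rankGammaUnif_off {ℓ m : ℕ} (hlm : ℓ < m) (hm2 : 2 ≤ m) {j k : Fin ℓ} (hjk : j ≠ k)
    {a b : Fin m} (hab : a ≠ b) :
    rankGammaUnif ℓ m (j, a) (k, b) = ((m : ℝ) * ((m : ℝ) - 1))⁻¹ := by
  have hm : (2 : ℝ) ≤ m := by exact_mod_cast hm2
  -- A transposition of two actions other than `a` fixes `a`, so the row is constant off `b = a`.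
  have hconst : ∀ c ∈ Finset.univ.erase a,
      rankGammaUnif ℓ m (j, a) (k, c) = rankGammaUnif ℓ m (j, a) (k, b) := by
    intro c hc
    have h := rankGammaUnif_perm (Equiv.swap b c) j k a b
    rwa [Equiv.swap_apply_left,
      Equiv.swap_apply_of_ne_of_ne hab (Finset.ne_of_mem_erase hc).symm] at h
  have hsum := rankGammaUnif_sum_right j k a
  rw [rankGammaUnif_diag hlm, ← Finset.add_sum_erase _ _ (Finset.mem_univ a),
    rankGammaUnif_same_action hjk, Finset.sum_congr rfl hconst, Finset.sum_const, nsmul_eq_mul,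
    Finset.card_erase_of_mem (Finset.mem_univ a), Finset.card_univ, Fintype.card_fin,
    Nat.cast_sub (by omega), Nat.cast_one, zero_add] at hsum
  have h1 : (m : ℝ) - 1 ≠ 0 := by linarith
  rw [mul_inv, ← hsum]
  field_simp

/-- Closed form of `Γ`, written so that multiplication by a vector reduces to its total, row and
column sums. -/
lemma rankGammaUnif_apply {ℓ m : ℕ} (hlm : ℓ < m) (hm2 : 2 ≤ m) (j k : Fin ℓ) (a b : Fin m) :
    rankGammaUnif ℓ m (j, a) (k, b) = ((m : ℝ) * ((m : ℝ) - 1))⁻¹ *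
      (1 - (if j = k then 1 else 0) - (if a = b then 1 else 0)
        + m * ((if j = k then 1 else 0) * (if a = b then 1 else 0))) := by
  have hm : (2 : ℝ) ≤ m := by exact_mod_cast hm2
  have h1 : (m : ℝ) - 1 ≠ 0 := by linarith
  by_cases hjk : j = k <;> by_cases hab : a = b
  · subst hjk hab
    rw [rankGammaUnif_diag hlm]
    simp only [if_true]
    field_simp
    ring
  · subst hjk
    simp [rankGammaUnif_same_slot j hab, hab]
  · subst hab
    simp [rankGammaUnif_same_action hjk, hjk]
  · simp [rankGammaUnif_off hlm hm2 hjk hab, hjk, hab]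

lemma rankGammaUnif_mulVec {ℓ m : ℕ} (hlm : ℓ < m) (hm2 : 2 ≤ m) (w : Fin ℓ × Fin m → ℝ)
    (j : Fin ℓ) (a : Fin m) :
    (rankGammaUnif ℓ m).mulVec w (j, a) = ((m : ℝ) * ((m : ℝ) - 1))⁻¹ *
      (∑ k, ∑ b, w (k, b) - ∑ b, w (j, b) - ∑ k, w (k, a) + m * w (j, a)) := by
  rw [mulVec, dotProduct, Fintype.sum_prod_type]
  simp_rw [rankGammaUnif_apply hlm hm2, mul_assoc]
  simp_rw [← Finset.mul_sum]
  congr 1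
  simp only [add_mul, sub_mul, one_mul, Finset.sum_add_distrib, Finset.sum_sub_distrib, ite_mul,
    zero_mul, mul_ite, mul_zero, Finset.sum_ite_eq, Finset.mem_univ, if_true, mul_assoc]
  congr 3
  simp

/-- A preimage of `1_s` under `Γ`. The sum in the middle term is a column sum of `1_s`; for injective
`s` it is the indicator of `a ∈ range s`. The constants come from solving `Γ w = 1_s`
with the ansatz `w = α 1_s + β 1[a ∈ range s] + γ`. -/
noncomputable def rankPre {ℓ m : ℕ} (s : Fin ℓ → Fin m) : Fin ℓ × Fin m → ℝ := fun p =>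
  ((m : ℝ) - 1) * rankInd s p + ((m : ℝ) - 1) / ((m : ℝ) - ℓ) * ∑ k, rankInd s (k, p.2)
    - ((ℓ : ℝ) - 1) * m / (((m : ℝ) - ℓ) * ℓ)

lemma rankGammaUnif_mulVec_rankPre {ℓ m : ℕ} (hℓ : 1 ≤ ℓ) (hlm : ℓ < m) (s : Fin ℓ → Fin m) :
    (rankGammaUnif ℓ m).mulVec (rankPre s) = rankInd s := by
  have hm2 : 2 ≤ m := by omega
  have h1 : (1 : ℝ) ≤ ℓ := by exact_mod_cast hℓ
  have h2 : (ℓ : ℝ) < m := by exact_mod_cast hlm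
  have hm : (2 : ℝ) ≤ m := by exact_mod_cast hm2
  have d1 : (m : ℝ) - 1 ≠ 0 := by linarith
  have d2 : (m : ℝ) - ℓ ≠ 0 := by linarith
  have d3 : (ℓ : ℝ) ≠ 0 := by linarith
  have d4 : (m : ℝ) ≠ 0 := by linarith
  have hT : ∑ b : Fin m, ∑ k : Fin ℓ, rankInd s (k, b) = ℓ := by
    rw [Finset.sum_comm]
    simp [rankInd_sum_action]
  have hrow : ∀ j, ∑ b, rankPre s (j, b) = ((m : ℝ) - 1) + ((m : ℝ) - 1) / ((m : ℝ) - ℓ) * ℓ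
      - m * (((ℓ : ℝ) - 1) * m / (((m : ℝ) - ℓ) * ℓ)) := by
    intro j
    simp only [rankPre, Finset.sum_add_distrib, Finset.sum_sub_distrib, ← Finset.mul_sum, hT,
      rankInd_sum_action, Finset.sum_const, Finset.card_univ, Fintype.card_fin, nsmul_eq_mul,
      mul_one]
  have hcol : ∀ a, ∑ k, rankPre s (k, a) = ((m : ℝ) - 1) * ∑ k, rankInd s (k, a)
      + ℓ * (((m : ℝ) - 1) / ((m : ℝ) - ℓ) * ∑ k, rankInd s (k, a))
      - ℓ * (((ℓ : ℝ) - 1) * m / (((m : ℝ) - ℓ) * ℓ)) := by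
    intro a
    simp only [rankPre, Finset.sum_add_distrib, Finset.sum_sub_distrib, ← Finset.mul_sum,
      Finset.sum_const, Finset.card_univ, Fintype.card_fin, nsmul_eq_mul]
    ring
  ext ⟨j, a⟩
  rw [rankGammaUnif_mulVec hlm hm2, hcol]
  simp only [hrow, Finset.sum_const, Finset.card_univ, Fintype.card_fin, nsmul_eq_mul]
  simp only [rankPre]
  generalize ∑ k, rankInd s (k, a) = C
  generalize rankInd s (j, a) = x
  field_simp
  ring

lemma rankInd_dotProduct {ℓ m : ℕ} (s : Fin ℓ → Fin m) (w : Fin ℓ × Fin m → ℝ) :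
    rankInd s ⬝ᵥ w = ∑ j, w (j, s j) := by
  rw [dotProduct, Fintype.sum_prod_type]
  simp [rankInd]

/-- For injective `s`, the column sum of `1_s` at `a` is the indicator of `a ∈ range s`. -/
lemma rankInd_sum_slot {ℓ m : ℕ} {s : Fin ℓ → Fin m} (hs : Function.Injective s) (a : Fin m) :
    ∑ k, rankInd s (k, a) = if a ∈ Finset.univ.image s then 1 else 0 := by
  split_ifs with h
  · obtain ⟨k, -, rfl⟩ := Finset.mem_image.1 h
    simp [rankInd, hs.eq_iff]
  · refine Finset.sum_eq_zero fun k _ => ?_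
    have : s k ≠ a := fun hk => h (Finset.mem_image.2 ⟨k, Finset.mem_univ k, hk⟩)
    simp [rankInd, this]

lemma sum_rankInd_slot {ℓ m : ℕ} {s s' : Fin ℓ → Fin m} (hs : Function.Injective s)
    (hs' : Function.Injective s') :
    ∑ j, ∑ k, rankInd s (k, s' j)
      = ((Finset.univ.image s ∩ Finset.univ.image s').card : ℝ) := by
  simp_rw [rankInd_sum_slot hs]
  rw [← Finset.sum_image (s := Finset.univ) (g := s')
    (f := fun a => if a ∈ Finset.univ.image s then (1 : ℝ) else 0) (fun x _ y _ h => hs' h),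
    Finset.sum_boole, Finset.filter_mem_eq_inter, Finset.inter_comm]

/-- On the range of the symmetric matrix `Γ`, the bilinear form of any `G` with `Γ G Γ = Γ` is
determined by preimages under `Γ`. -/
lemma rankInd_form_eq {ℓ m : ℕ} (hℓ : 1 ≤ ℓ) (hlm : ℓ < m)
    (G : Matrix (Fin ℓ × Fin m) (Fin ℓ × Fin m) ℝ)
    (hG1 : rankGammaUnif ℓ m * G * rankGammaUnif ℓ m = rankGammaUnif ℓ m)
    (s s' : Fin ℓ → Fin m) :
    rankInd s' ⬝ᵥ G.mulVec (rankInd s) = rankInd s' ⬝ᵥ rankPre s := by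
  have hs := rankGammaUnif_mulVec_rankPre hℓ hlm s
  have hleft : rankPre s' ᵥ* rankGammaUnif ℓ m = rankInd s' := by
    rw [← mulVec_transpose, rankGammaUnif_transpose, rankGammaUnif_mulVec_rankPre hℓ hlm s']
  calc rankInd s' ⬝ᵥ G.mulVec (rankInd s)
      = (rankPre s' ᵥ* rankGammaUnif ℓ m) ⬝ᵥ
          G.mulVec ((rankGammaUnif ℓ m).mulVec (rankPre s)) := by rw [hs, hleft]
    _ = rankPre s' ⬝ᵥ (rankGammaUnif ℓ m * G * rankGammaUnif ℓ m).mulVec (rankPre s) := by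
        rw [← dotProduct_mulVec, mulVec_mulVec, mulVec_mulVec, Matrix.mul_assoc]
    _ = rankInd s' ⬝ᵥ rankPre s := by rw [hG1, dotProduct_mulVec, hleft]

/-- (Pairwise slate form of the pseudoinverse for uniform ranking
logging, case ℓ < m.) With `G` the Moore–Penrose pseudoinverse of `Γ_ν`, for all
rankings `s, s'`:
`1_{s'}ᵀ G 1_s = 1 − ℓ(m−1)/(m−ℓ) + (m−1)·|{j : s'_j = s_j}|
                 + ((m−1)/(m−ℓ))·|range(s) ∩ range(s')|`;
in particular `1_sᵀ G 1_s = m·ℓ − ℓ + 1`. -/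
theorem uniform_ranking_pairwise_form_lt
    {ℓ m : ℕ} (hℓ : 1 ≤ ℓ) (hlm : ℓ < m)
    (G : Matrix (Fin ℓ × Fin m) (Fin ℓ × Fin m) ℝ)
    (hG1 : rankGammaUnif ℓ m * G * rankGammaUnif ℓ m = rankGammaUnif ℓ m)
    (hG2 : G * rankGammaUnif ℓ m * G = G)
    (hG3 : (rankGammaUnif ℓ m * G)ᵀ = rankGammaUnif ℓ m * G)
    (hG4 : (G * rankGammaUnif ℓ m)ᵀ = G * rankGammaUnif ℓ m) :
    (∀ s s' : Fin ℓ → Fin m, Function.Injective s → Function.Injective s' →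
      rankInd s' ⬝ᵥ G.mulVec (rankInd s)
        = 1 - (ℓ : ℝ) * ((m : ℝ) - 1) / ((m : ℝ) - (ℓ : ℝ))
          + ((m : ℝ) - 1) * ((Finset.univ.filter (fun j => s' j = s j)).card : ℝ)
          + (((m : ℝ) - 1) / ((m : ℝ) - (ℓ : ℝ))) *
              (((Finset.univ.image s ∩ Finset.univ.image s').card : ℕ) : ℝ)) ∧
    (∀ s : Fin ℓ → Fin m, Function.Injective s →
      rankInd s ⬝ᵥ G.mulVec (rankInd s) = (m : ℝ) * (ℓ : ℝ) - (ℓ : ℝ) + 1) := by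
  have h1 : (1 : ℝ) ≤ ℓ := by exact_mod_cast hℓ
  have h2 : (ℓ : ℝ) < m := by exact_mod_cast hlm
  have d2 : (m : ℝ) - ℓ ≠ 0 := by linarith
  have d3 : (ℓ : ℝ) ≠ 0 := by linarith
  have key : ∀ s s' : Fin ℓ → Fin m, Function.Injective s → Function.Injective s' →
      rankInd s' ⬝ᵥ G.mulVec (rankInd s)
        = 1 - (ℓ : ℝ) * ((m : ℝ) - 1) / ((m : ℝ) - (ℓ : ℝ))
          + ((m : ℝ) - 1) * ((Finset.univ.filter (fun j => s' j = s j)).card : ℝ)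
          + (((m : ℝ) - 1) / ((m : ℝ) - (ℓ : ℝ))) *
              (((Finset.univ.image s ∩ Finset.univ.image s').card : ℕ) : ℝ) := by
    intro s s' hs hs'
    have hag : ∑ j, rankInd s (j, s' j)
        = ((Finset.univ.filter (fun j => s' j = s j)).card : ℝ) := by
      simp [rankInd, eq_comm]
    rw [rankInd_form_eq hℓ hlm G hG1, rankInd_dotProduct]
    simp only [rankPre, Finset.sum_add_distrib, Finset.sum_sub_distrib, ← Finset.mul_sum,
      Finset.sum_const, Finset.card_univ, Fintype.card_fin, nsmul_eq_mul]
    rw [sum_rankInd_slot hs hs', hag]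
    field_simp
    ring
  refine ⟨key, fun s hs => ?_⟩
  rw [key s s hs hs, Finset.inter_self, Finset.card_image_of_injective _ hs]
  simp only [Finset.filter_true, Finset.card_univ, Fintype.card_fin]
  field_simp
  ring
end

section
/- Let A and B be real symmetric positive semidefinite d × d matrices with Null(A) ⊆ Null(B), and let G_A and G_B be their Moore–Penrose pseudoinverses. If λ ≥ 0 is such that zᵀ A z ≤ λ · zᵀ B z for every vector z ∈ ℝ^d orthogonal to Null(B), then zᵀ G_B z ≤ λ · zᵀ G_A z for every vector z ∈ ℝ^d orthogonal to Null(B). -/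
open Matrix BigOperators

/-!
If `z ⊥ Null(B)`, then `z` also lies in the orthogonal complement of `Null(A)`, so
`z = B y = A x` with `y = G_B z` and `x = G_A z`, and `y ⊥ Null(B)`. The assumed bound at `y` reads
`yᵀ A y ≤ λ yᵀ B y = λ zᵀ y`, while `zᵀ y = xᵀ A y` and `zᵀ G_A z = xᵀ A x`. Expanding
`(λ x - y)ᵀ A (λ x - y) ≥ 0` gives `λ zᵀ y ≤ λ² xᵀ A x`, which settles the case `λ > 0`.
If `λ = 0`, then `yᵀ A y = 0`, hence `A y = 0` and `zᵀ y = xᵀ A y = 0`.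
-/

lemma dotProduct_mulVec_of_symm {d : ℕ} {M : Matrix (Fin d) (Fin d) ℝ} (hM : Mᵀ = M)
    (u v : Fin d → ℝ) : u ⬝ᵥ M *ᵥ v = (M *ᵥ u) ⬝ᵥ v := by
  rw [dotProduct_mulVec, ← mulVec_transpose, hM]

/-- `M G` is the orthogonal projection onto the range of `M`, which for symmetric `M` is the
orthogonal complement of its null space. -/
lemma mulVec_pinv_of_orthogonal_null {d : ℕ} {M G : Matrix (Fin d) (Fin d) ℝ} (hM : Mᵀ = M)
    (h1 : M * G * M = M) (h3 : (M * G)ᵀ = M * G) {z : Fin d → ℝ}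
    (hz : ∀ v : Fin d → ℝ, M *ᵥ v = 0 → z ⬝ᵥ v = 0) : M *ᵥ (G *ᵥ z) = z := by
  have hMM : M * (M * G) = M := by
    have h := congrArg transpose h1
    rwa [transpose_mul, h3, hM] at h
  have hv : M *ᵥ (z - M *ᵥ (G *ᵥ z)) = 0 := by
    rw [mulVec_sub, mulVec_mulVec, mulVec_mulVec, Matrix.mul_assoc, hMM, sub_self]
  -- The residual `z - M G z` is orthogonal to both `z` and `M G z`, hence to itself.
  have h0 : (z - M *ᵥ (G *ᵥ z)) ⬝ᵥ (z - M *ᵥ (G *ᵥ z)) = 0 := by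
    rw [sub_dotProduct, hz _ hv, ← dotProduct_mulVec_of_symm hM, hv, dotProduct_zero, sub_zero]
  exact (sub_eq_zero.mp (dotProduct_self_eq_zero.mp h0)).symm

lemma pinv_mulVec_orthogonal_null {d : ℕ} {M G : Matrix (Fin d) (Fin d) ℝ}
    (h2 : G * M * G = G) (h4 : (G * M)ᵀ = G * M) (z v : Fin d → ℝ) (hv : M *ᵥ v = 0) :
    (G *ᵥ z) ⬝ᵥ v = 0 := by
  rw [← h2, ← mulVec_mulVec, ← dotProduct_mulVec_of_symm h4, ← mulVec_mulVec, hv,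
    mulVec_zero, dotProduct_zero]

/-- Let `A, B` be real symmetric PSD `d × d` matrices with
`Null(A) ⊆ Null(B)`, and `G_A, G_B` their Moore–Penrose pseudoinverses. If `λ ≥ 0` is
such that `zᵀ A z ≤ λ·zᵀ B z` for every `z ⊥ Null(B)`, then `zᵀ G_B z ≤ λ·zᵀ G_A z`
for every `z ⊥ Null(B)`. -/
theorem pseudoinverse_quadratic_form_comparison
    {d : ℕ} (A B GA GB : Matrix (Fin d) (Fin d) ℝ)
    (hA : A.PosSemidef) (hB : B.PosSemidef)
    (hAsymm : Aᵀ = A) (hBsymm : Bᵀ = B)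
    -- Null(A) ⊆ Null(B)
    (hnull : ∀ v : Fin d → ℝ, A.mulVec v = 0 → B.mulVec v = 0)
    -- G_A: Moore–Penrose pseudoinverse of A
    (hGA1 : A * GA * A = A) (hGA2 : GA * A * GA = GA)
    (hGA3 : (A * GA)ᵀ = A * GA) (hGA4 : (GA * A)ᵀ = GA * A)
    -- G_B: Moore–Penrose pseudoinverse of B
    (hGB1 : B * GB * B = B) (hGB2 : GB * B * GB = GB)
    (hGB3 : (B * GB)ᵀ = B * GB) (hGB4 : (GB * B)ᵀ = GB * B)
    (lam : ℝ) (hlam : 0 ≤ lam)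
    (hbound : ∀ z : Fin d → ℝ, (∀ v : Fin d → ℝ, B.mulVec v = 0 → z ⬝ᵥ v = 0) →
      z ⬝ᵥ A.mulVec z ≤ lam * (z ⬝ᵥ B.mulVec z)) :
    ∀ z : Fin d → ℝ, (∀ v : Fin d → ℝ, B.mulVec v = 0 → z ⬝ᵥ v = 0) →
      z ⬝ᵥ GB.mulVec z ≤ lam * (z ⬝ᵥ GA.mulVec z) := by
  intro z hz
  have hBy : B *ᵥ (GB *ᵥ z) = z := mulVec_pinv_of_orthogonal_null hBsymm hGB1 hGB3 hz
  have hAx : A *ᵥ (GA *ᵥ z) = z :=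
    mulVec_pinv_of_orthogonal_null hAsymm hGA1 hGA3 fun v hv => hz v (hnull v hv)
  have hb := hbound (GB *ᵥ z) (pinv_mulVec_orthogonal_null hGB2 hGB4 z)
  rw [hBy, dotProduct_comm _ z] at hb
  generalize GB *ᵥ z = y at *
  generalize GA *ᵥ z = x at *
  have hxy : x ⬝ᵥ A *ᵥ y = z ⬝ᵥ y := by rw [dotProduct_mulVec_of_symm hAsymm, hAx]
  rcases hlam.eq_or_lt with h | h
  · subst h
    have hy : y ⬝ᵥ A *ᵥ y = 0 :=
      le_antisymm (by simpa using hb) (by simpa using hA.dotProduct_mulVec_nonneg y)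
    have hAy : A *ᵥ y = 0 := (hA.dotProduct_mulVec_zero_iff y).mp (by simpa using hy)
    rw [← hxy, hAy, dotProduct_zero, zero_mul]
  · have hq : 0 ≤ (lam • x - y) ⬝ᵥ A *ᵥ (lam • x - y) := by
      simpa using hA.dotProduct_mulVec_nonneg (lam • x - y)
    rw [mulVec_sub, mulVec_smul, hAx, dotProduct_sub, sub_dotProduct, sub_dotProduct,
      smul_dotProduct, smul_dotProduct, hxy, dotProduct_smul, dotProduct_smul,
      dotProduct_comm x z, dotProduct_comm y z] at hq
    simp only [smul_eq_mul] at hq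
    exact le_of_mul_le_mul_left (by linarith) h
end
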